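/- arXiv:1808.09250 — 2 statements merged into one kernel-verified Lean document; each statement's English description precedes it below -/
import Mathlib

section
/- Let d ≥ 2, let Ω ⊃ B₂ be bounded, let T be the optimal transport map from χ_Ω dx to a compactly supported measure μ with μ(ℝ^d) = |Ω|, and assume E := ∫_{B₂}|T−x|² ≪ 1. Set T_t := (1−t)id + tT, ρ_t := T_t#(χ_Ω dx), j_t := T_t#((T−id)χ_Ω dx). Then for a.e. t ∈ (0,1): sup_{B_{3/2}} ρ_t ≤ (1−t)^{−d} and sup_{B_{3/2}} |j_t| ≲ E^{1/(d+2)} (1−t)^{−d}; moreover ∫_{B_{3/2}} (1/ρ_t)|j_t|² ≤ E and ∫_{B_{3/2}} ρ_t ≲ 1. -/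
/-!
An optimal map `T` is monotone on a subset `G` of full measure of `Ω` (`exists_monotone_set`), and
all four bounds follow from this monotonicity.

*Monotonicity.* Fix a vector `v`. If `⟪T (x + v) - T x, v⟫ < 0` on a set of positive measure, pick
a small piece `A` of it that is disjoint from `A + v`. Exchanging the values of `T` on `A` and
`A + v` by translation keeps the pushforward and strictly lowers the (finite) cost, a contradiction
(`swap_null`). By Fubini `T` is monotone along almost every pair of points, and then along every
pair of points whose graph points `(x, T x)` lie in the support of the pushforward of `χ_Ω dx`
under `x ↦ (x, T x)`.

*Density.* Monotonicity gives `(1 - t) |x - y| ≤ |T_t x - T_t y|` on `G`, so the inverse of `T_t` is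
Lipschitz with constant `(1 - t)⁻¹`, and comparison with the Hausdorff measure yields
`|Ω ∩ T_t⁻¹ A| ≤ (1 - t)^{-d} |A|` (`volume_preimage_le`).

*Displacement.* For `y ∈ G ∩ B_{7/4}`, testing monotonicity against points `x` of a ball of radius
`r` placed in the direction of `T y - y` gives `|T y - y| ≤ 3 |T x - x| + 9 r`; choosing an `x` whose
displacement is at most the average one and `r ∼ E^{1/(d+2)}` gives `|T y - y| ≲ E^{1/(d+2)}`
(`displacement_bound`).

*Localization.* When the displacement is small, monotonicity prevents points of `G` outside
`B_{7/4}` from being mapped into `B_{3/2}` by `T_t` (`norm_lt_of_Tt_mem`). Hence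
`Ω ∩ T_t⁻¹ B_{3/2}` lies in `B_{7/4} ⊆ B_2` up to a null set, which gives the energy and mass
bounds, and, combined with the displacement and density bounds, the flux bound.
-/

open MeasureTheory Measure Set Metric
open scoped ENNReal NNReal Topology

noncomputable section

abbrev Ed (d : ℕ) : Type := EuclideanSpace ℝ (Fin d)

/-- `T` is the optimal transport map from `χ_Ω dx` to `μ`. -/
def IsOptMap {d : ℕ} (Ω : Set (Ed d)) (μ : Measure (Ed d)) (T : Ed d → Ed d) : Prop :=
  Measurable T ∧ Measure.map T (volume.restrict Ω) = μ ∧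
  ∀ S : Ed d → Ed d, Measurable S → Measure.map S (volume.restrict Ω) = μ →
    ∫⁻ x in Ω, ENNReal.ofReal (‖T x - x‖ ^ 2) ≤ ∫⁻ x in Ω, ENNReal.ofReal (‖S x - x‖ ^ 2)

/-- McCann interpolation `T_t = (1−t)id + tT`. -/
def Tt {d : ℕ} (T : Ed d → Ed d) (t : ℝ) (x : Ed d) : Ed d := (1 - t) • x + t • T x

section aux

variable {d : ℕ}

/-! ### Monotonicity of optimal maps -/

theorem cost_ne_top {Ω : Set (Ed d)} {μ : Measure (Ed d)} {T : Ed d → Ed d}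
    (hb : Bornology.IsBounded Ω) (hΩ : MeasurableSet Ω)
    (hK : ∃ K : Set (Ed d), IsCompact K ∧ μ Kᶜ = 0) (hT : IsOptMap Ω μ T) :
    ∫⁻ x in Ω, ENNReal.ofReal (‖T x - x‖ ^ 2) ≠ ∞ := by
  obtain ⟨K, hK, hμ⟩ := hK
  obtain ⟨hTm, hmap, -⟩ := hT
  obtain ⟨R₁, hR₁⟩ := hK.isBounded.exists_norm_le
  obtain ⟨R₂, hR₂⟩ := hb.exists_norm_le
  have hae : ∀ᵐ x ∂(volume.restrict Ω), T x ∈ K := by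
    rw [ae_iff]
    rw [← hmap, Measure.map_apply hTm hK.measurableSet.compl] at hμ
    exact hμ
  refine ne_of_lt (lt_of_le_of_lt (b := ∫⁻ _ in Ω, ENNReal.ofReal ((R₁ + R₂) ^ 2)) ?_ ?_)
  · refine lintegral_mono_ae ?_
    filter_upwards [hae, ae_restrict_mem hΩ] with x hx hxΩ
    gcongr
    exact (norm_sub_le _ _).trans (add_le_add (hR₁ _ hx) (hR₂ _ hxΩ))
  · rw [lintegral_const, Measure.restrict_apply_univ]
    exact ENNReal.mul_lt_top ENNReal.ofReal_lt_top hb.measure_lt_top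

/-- Splitting an integral over `Ω` along two disjoint translates `A`, `A + v` contained in `Ω`. -/
theorem lintegral_split {Ω A : Set (Ed d)} {v : Ed d} (hA : MeasurableSet A)
    (hAΩ : A ⊆ Ω) (hBΩ : (fun y => y - v) ⁻¹' A ⊆ Ω)
    (hdisj : ∀ x ∈ A, x + v ∉ A) (F : Ed d → ℝ≥0∞) (hF : Measurable F) :
    ∫⁻ x in Ω, F x = (∫⁻ x in A, (F x + F (x + v))) +
      ∫⁻ x in Ω \ (A ∪ (fun y => y - v) ⁻¹' A), F x := by
  have hB : MeasurableSet ((fun y => y - v) ⁻¹' A) := by measurability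
  have h1 := lintegral_inter_add_sdiff (μ := volume) F Ω (hA.union hB)
  rw [inter_eq_self_of_subset_right (union_subset hAΩ hBΩ)] at h1
  rw [← h1, lintegral_union hB, lintegral_add_left hF]
  · congr 2
    have h2 := (measurePreserving_add_right (volume : Measure (Ed d)) v).setLIntegral_comp_preimage
      hB hF
    rw [← h2]
    congr 2
    ext x; simp
  · rw [Set.disjoint_left]
    intro x hx hx'
    exact hdisj _ hx' (by simpa using hx)

/-- Exchanging the targets `a`, `b` of `x`, `x + v` lowers the quadratic cost when `b - a` points
against `v`. -/
theorem cost_swap (x v a b : Ed d) (h : inner ℝ (b - a) v < 0) :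
    ENNReal.ofReal (‖b - x‖ ^ 2) + ENNReal.ofReal (‖a - (x + v)‖ ^ 2) <
    ENNReal.ofReal (‖a - x‖ ^ 2) + ENNReal.ofReal (‖b - (x + v)‖ ^ 2) := by
  rw [← ENNReal.ofReal_add (by positivity) (by positivity),
    ← ENNReal.ofReal_add (by positivity) (by positivity)]
  have h1 : ‖a - (x + v)‖ ^ 2 = ‖a - x‖ ^ 2 - 2 * inner ℝ (a - x) v + ‖v‖ ^ 2 := by
    rw [← sub_sub, norm_sub_sq_real]
  have h2 : ‖b - (x + v)‖ ^ 2 = ‖b - x‖ ^ 2 - 2 * inner ℝ (b - x) v + ‖v‖ ^ 2 := by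
    rw [← sub_sub, norm_sub_sq_real]
  have h3 : inner ℝ (b - a) v = inner ℝ (b - x) v - inner ℝ (a - x) v := by
    rw [← inner_sub_left]; congr 1; abel
  have h4 : ‖b - x‖ ^ 2 + ‖a - (x + v)‖ ^ 2 < ‖a - x‖ ^ 2 + ‖b - (x + v)‖ ^ 2 := by
    rw [h1, h2]; linarith
  exact (ENNReal.ofReal_lt_ofReal_iff_of_nonneg (by positivity)).2 h4

open Classical in
/-- Swapping the images of a set `A` and of its translate `A + v` does not change the pushforward
and would strictly lower the cost if `T` failed to be monotone along `v` on `A`. -/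
theorem swap_null {Ω : Set (Ed d)} {μ : Measure (Ed d)} {T : Ed d → Ed d}
    (hfin : ∫⁻ x in Ω, ENNReal.ofReal (‖T x - x‖ ^ 2) ≠ ∞)
    (hΩ : MeasurableSet Ω) (hT : IsOptMap Ω μ T)
    {A : Set (Ed d)} {v : Ed d} (hA : MeasurableSet A)
    (hAΩ : A ⊆ Ω) (hBΩ : (fun y => y - v) ⁻¹' A ⊆ Ω)
    (hdisj : ∀ x ∈ A, x + v ∉ A) (hneg : ∀ x ∈ A, inner ℝ (T (x + v) - T x) v < 0) :
    volume A = 0 := by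
  obtain ⟨hTm, hmap, hopt⟩ := hT
  have hB : MeasurableSet ((fun y => y - v) ⁻¹' A) := by measurability
  set S : Ed d → Ed d := fun x =>
    if x ∈ A then T (x + v) else if x ∈ (fun y => y - v) ⁻¹' A then T (x - v) else T x with hS
  have hSm : Measurable S := by
    refine Measurable.ite hA (by fun_prop) (Measurable.ite hB (by fun_prop) hTm)
  have hSA : ∀ x ∈ A, S x = T (x + v) := fun x hx => by simp [hS, hx]
  have hSB : ∀ x ∈ A, S (x + v) = T x := fun x hx => by simp [hS, hx, hdisj x hx]
  have hSC : ∀ x ∈ Ω \ (A ∪ (fun y => y - v) ⁻¹' A), S x = T x := by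
    rintro x ⟨-, hx⟩
    simp only [mem_union, not_or] at hx
    simp only [hS, hx.1, hx.2, if_false]
  have hC : MeasurableSet (Ω \ (A ∪ (fun y => y - v) ⁻¹' A)) := hΩ.diff (hA.union hB)
  -- stated for a general integrand `c` so as to cover both the pushforward and the cost
  have key : ∀ c : Ed d → Ed d → ℝ≥0∞, Measurable (fun p : Ed d × Ed d => c p.1 p.2) →
      ∫⁻ x in Ω, c x (S x) = (∫⁻ x in A, (c x (T (x + v)) + c (x + v) (T x))) +
        ∫⁻ x in Ω \ (A ∪ (fun y => y - v) ⁻¹' A), c x (T x) := by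
    intro c hc
    rw [lintegral_split hA hAΩ hBΩ hdisj (fun x => c x (S x))
      (hc.comp (measurable_id.prodMk hSm))]
    congr 1
    · refine setLIntegral_congr_fun hA fun x hx => ?_
      simp only [hSA x hx, hSB x hx]
    · refine setLIntegral_congr_fun hC fun x hx => ?_
      simp only [hSC x hx]
  have keyT : ∀ c : Ed d → Ed d → ℝ≥0∞, Measurable (fun p : Ed d × Ed d => c p.1 p.2) →
      ∫⁻ x in Ω, c x (T x) = (∫⁻ x in A, (c x (T x) + c (x + v) (T (x + v)))) +
        ∫⁻ x in Ω \ (A ∪ (fun y => y - v) ⁻¹' A), c x (T x) := fun c hc =>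
    lintegral_split hA hAΩ hBΩ hdisj (fun x => c x (T x)) (hc.comp (measurable_id.prodMk hTm))
  have hSmap : Measure.map S (volume.restrict Ω) = μ := by
    rw [← hmap]
    ext s hs
    rw [← lintegral_indicator_one hs, ← lintegral_indicator_one hs,
      lintegral_map (measurable_one.indicator hs) hSm,
      lintegral_map (measurable_one.indicator hs) hTm]
    have hm : Measurable (fun p : Ed d × Ed d => s.indicator (1 : Ed d → ℝ≥0∞) p.2) :=
      (measurable_one.indicator hs).comp measurable_snd
    rw [key (fun _ y => s.indicator 1 y) hm, keyT (fun _ y => s.indicator 1 y) hm]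
    simp only [add_comm]
  have hcm : Measurable (fun p : Ed d × Ed d => ENNReal.ofReal (‖p.2 - p.1‖ ^ 2)) := by fun_prop
  have hle := hopt S hSm hSmap
  rw [keyT (fun x y => ENNReal.ofReal (‖y - x‖ ^ 2)) hcm] at hfin
  rw [keyT (fun x y => ENNReal.ofReal (‖y - x‖ ^ 2)) hcm,
    key (fun x y => ENNReal.ofReal (‖y - x‖ ^ 2)) hcm] at hle
  rw [ENNReal.add_ne_top] at hfin
  have hle' := (ENNReal.add_le_add_iff_right hfin.2).1 hle
  have hlt : ∀ x ∈ A, _ := fun x hx => cost_swap x v (T x) (T (x + v)) (hneg x hx)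
  have hle2 := setLIntegral_mono' (μ := volume) hA fun x hx => (hlt x hx).le
  have heq := ae_eq_of_ae_le_of_lintegral_le (μ := volume.restrict A)
    (g := fun x => ENNReal.ofReal (‖T x - x‖ ^ 2) + ENNReal.ofReal (‖T (x + v) - (x + v)‖ ^ 2))
    ((ae_restrict_iff' hA).2 (ae_of_all _ fun x hx => (hlt x hx).le))
    (ne_top_of_le_ne_top hfin.1 hle2) (Measurable.aemeasurable (by fun_prop)) hle'
  have hfalse : ∀ᵐ x ∂(volume.restrict A), False := by
    filter_upwards [heq, ae_restrict_mem hA] with x hx hxA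
    exact (hlt x hxA).ne hx
  simpa [ae_iff] using hfalse

/-- Monotonicity along a fixed translation; the bad set is null because `swap_null` applies to its
intersection with any ball of radius `‖v‖ / 2`. -/
theorem monotone_translate {Ω : Set (Ed d)} {μ : Measure (Ed d)} {T : Ed d → Ed d}
    (hfin : ∫⁻ x in Ω, ENNReal.ofReal (‖T x - x‖ ^ 2) ≠ ∞)
    (hΩ : MeasurableSet Ω) (hT : IsOptMap Ω μ T) (v : Ed d) :
    ∀ᵐ x, x ∈ Ω → x + v ∈ Ω → 0 ≤ inner ℝ (T (x + v) - T x) v := by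
  have hTm := hT.1
  by_cases hv : v = 0
  · simp [hv]
  have hv' : 0 < ‖v‖ := norm_pos_iff.2 hv
  set N : Set (Ed d) := {x | x ∈ Ω ∧ x + v ∈ Ω ∧ inner ℝ (T (x + v) - T x) v < 0} with hN
  have hNm : MeasurableSet N := by
    refine hΩ.inter (MeasurableSet.inter ?_ ?_)
    · exact (measurable_add_const v) hΩ
    · exact measurableSet_lt (f := fun x => inner ℝ (T (x + v) - T x) v) (by fun_prop)
        measurable_const
  have : volume N = 0 := by
    refine measure_null_of_locally_null _ fun x hx => ⟨N ∩ ball x (‖v‖ / 2),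
      inter_mem_nhdsWithin _ (ball_mem_nhds _ (by positivity)), ?_⟩
    refine swap_null (v := v) hfin hΩ hT (hNm.inter measurableSet_ball) (fun y hy => hy.1.1)
      (fun y hy => by simpa using hy.1.2.1) ?_ (fun y hy => hy.1.2.2)
    intro y hy hy'
    have h1 := hy.2
    have h2 := hy'.2
    rw [mem_ball, dist_eq_norm] at h1 h2
    have : ‖v‖ ≤ ‖y + v - x‖ + ‖y - x‖ := by
      have := norm_sub_le (y + v - x) (y - x)
      rwa [show y + v - x - (y - x) = v by abel] at this
    linarith
  filter_upwards [measure_eq_zero_iff_ae_notMem.1 this] with x hx h1 h2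
  by_contra h
  exact hx ⟨h1, h2, not_le.1 h⟩

/-- An optimal map is monotone on a subset of full measure. -/
theorem exists_monotone_set {Ω : Set (Ed d)} {μ : Measure (Ed d)} {T : Ed d → Ed d}
    (hfin : ∫⁻ x in Ω, ENNReal.ofReal (‖T x - x‖ ^ 2) ≠ ∞)
    (hΩ : MeasurableSet Ω) (hT : IsOptMap Ω μ T) :
    ∃ G : Set (Ed d), (∀ᵐ x ∂(volume.restrict Ω), x ∈ G) ∧
      ∀ x ∈ G, ∀ y ∈ G, 0 ≤ inner ℝ (T y - T x) (y - x) := by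
  have hTm := hT.1
  have hpair : ∀ᵐ x, ∀ᵐ y, x ∈ Ω → y ∈ Ω → 0 ≤ inner ℝ (T y - T x) (y - x) := by
    have h1 : ∀ᵐ v : Ed d, ∀ᵐ x : Ed d,
        x ∈ Ω → x + v ∈ Ω → 0 ≤ inner ℝ (T (x + v) - T x) v :=
      ae_of_all _ (monotone_translate hfin hΩ hT)
    rw [Measure.ae_ae_comm] at h1
    · filter_upwards [h1] with x hx
      have h2 := (measurePreserving_sub_right (volume : Measure (Ed d)) x).quasiMeasurePreserving.ae
        hx
      filter_upwards [h2] with y hy h3 h4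
      simpa using hy h3 (by simpa using h4)
    · have e : {p : Ed d × Ed d | p.2 ∈ Ω → p.2 + p.1 ∈ Ω →
          0 ≤ inner ℝ (T (p.2 + p.1) - T p.2) p.1} =
          (Prod.snd ⁻¹' Ω)ᶜ ∪ (((fun p : Ed d × Ed d => p.2 + p.1) ⁻¹' Ω)ᶜ ∪
            {p | 0 ≤ inner ℝ (T (p.2 + p.1) - T p.2) p.1}) := by
        ext p; simp only [mem_ofPred_eq, mem_union, mem_compl_iff, mem_preimage]; tauto
      rw [e]
      refine (measurable_snd hΩ).compl.union (MeasurableSet.union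
        (MeasurableSet.compl ?_) (measurableSet_le measurable_const (by fun_prop)))
      exact (show Measurable (fun p : Ed d × Ed d => p.2 + p.1) by fun_prop) hΩ
  have hgr : Measurable (fun x => (x, T x)) := measurable_id.prodMk hTm
  set ν : Measure (Ed d × Ed d) := Measure.map (fun x => (x, T x)) (volume.restrict Ω) with hν
  refine ⟨{x | (x, T x) ∈ ν.support}, ?_, ?_⟩
  · exact ae_of_ae_map hgr.aemeasurable (Measure.support_mem_ae (μ := ν))
  · intro x hx y hy
    by_contra hneg
    rw [not_le] at hneg
    have hcont : Continuous (fun q : (Ed d × Ed d) × (Ed d × Ed d) =>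
        inner ℝ (q.2.2 - q.1.2) (q.2.1 - q.1.1)) := by fun_prop
    have hopen : {q : (Ed d × Ed d) × (Ed d × Ed d) |
        inner ℝ (q.2.2 - q.1.2) (q.2.1 - q.1.1) < 0} ∈ 𝓝 ((x, T x), (y, T y)) :=
      (isOpen_lt hcont continuous_const).mem_nhds hneg
    rw [nhds_prod_eq, Filter.mem_prod_iff] at hopen
    obtain ⟨U, hU, V, hV, hUV⟩ := hopen
    -- almost-everywhere properties hold at some point whose graph point is close to `(z, T z)`
    have pos : ∀ z, (z, T z) ∈ ν.support → ∀ U ∈ 𝓝 (z, T z), ∀ p : Ed d → Prop, (∀ᵐ x, p x) →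
        ∃ x ∈ Ω, p x ∧ (x, T x) ∈ U := by
      intro z hz U hU p hp
      obtain ⟨U', hU'U, hU'o, hzU'⟩ := _root_.mem_nhds_iff.1 hU
      have h1 := (Measure.mem_support_iff_forall _).1 hz U' (hU'o.mem_nhds hzU')
      rw [hν, Measure.map_apply hgr hU'o.measurableSet,
        Measure.restrict_apply (hgr hU'o.measurableSet)] at h1
      obtain ⟨w, hw⟩ := (frequently_ae_mem_iff.2 h1.ne').and_eventually hp |>.exists
      exact ⟨w, hw.1.2, hw.2, hU'U hw.1.1⟩
    obtain ⟨x', hx'Ω, hx', hx'U⟩ := pos x hx U hU _ hpair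
    obtain ⟨y', hy'Ω, hy', hy'V⟩ := pos y hy V hV _ hx'
    have h1 := hy' hx'Ω hy'Ω
    have h2 : inner ℝ (T y' - T x') (y' - x') < 0 :=
      hUV (show ((x', T x'), (y', T y')) ∈ U ×ˢ V from ⟨hx'U, hy'V⟩)
    exact absurd h1 (not_le.2 h2)

/-! ### Volume distortion and monotonicity of the interpolant -/

/-- A map expanding distances on `G` by a factor at least `κ` pulls volume back with factor `κ ^ (-d)`. -/
theorem volume_preimage_le {G : Set (Ed d)} {f : Ed d → Ed d} {κ : ℝ} (hκ : 0 < κ)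
    (hf : ∀ x ∈ G, ∀ y ∈ G, κ * ‖x - y‖ ≤ ‖f x - f y‖) (A : Set (Ed d)) :
    volume (G ∩ f ⁻¹' A) ≤ (ENNReal.ofReal (κ ^ d))⁻¹ * volume A := by
  have hinj : InjOn f G := by
    intro x hx y hy h
    have := hf x hx y hy
    rw [h, sub_self, norm_zero] at this
    have h0 : ‖x - y‖ ≤ 0 := by
      by_contra h'
      have := mul_pos hκ (not_le.1 h')
      linarith
    exact sub_eq_zero.1 (norm_le_zero_iff.1 h0)
  set s := G ∩ f ⁻¹' A with hs
  set g := Function.invFunOn f G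
  have hg : ∀ x ∈ G, g (f x) = x := fun x hx => hinj.leftInvOn_invFunOn hx
  have hlip : LipschitzOnWith (Real.toNNReal κ⁻¹) g (f '' s) := by
    refine LipschitzOnWith.of_dist_le_mul ?_
    rintro _ ⟨x, hx, rfl⟩ _ ⟨y, hy, rfl⟩
    rw [hg x hx.1, hg y hy.1, dist_eq_norm, dist_eq_norm, Real.coe_toNNReal _ (by positivity),
      inv_mul_eq_div, le_div_iff₀ hκ, mul_comm]
    exact hf x hx.1 y hy.1
  have himg : g '' (f '' s) = s := by
    rw [image_image]
    exact (image_congr fun x hx => hg x hx.1).trans (image_id' s)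
  have hd : ((Module.finrank ℝ (Ed d) : ℕ) : ℝ) = d := by simp
  have h1 := hlip.hausdorffMeasure_image_le (d := (Module.finrank ℝ (Ed d) : ℕ)) (by positivity)
  rw [himg] at h1
  -- in the Euclidean norm the Hausdorff measure is only a multiple of the volume, which suffices
  have hH := Measure.isAddLeftInvariant_eq_smul (volume : Measure (Ed d))
    (μH[((Module.finrank ℝ (Ed d) : ℕ) : ℝ)])
  have h2 : volume s ≤ (Real.toNNReal κ⁻¹ : ℝ≥0∞) ^ ((Module.finrank ℝ (Ed d) : ℕ) : ℝ) *
      volume (f '' s) := by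
    rw [hH]
    simp only [Measure.smul_apply, ENNReal.smul_def, smul_eq_mul]
    calc _ ≤ _ := mul_le_mul_right h1 _
      _ = _ := by ring
  have h3 : (Real.toNNReal κ⁻¹ : ℝ≥0∞) ^ ((Module.finrank ℝ (Ed d) : ℕ) : ℝ) =
      (ENNReal.ofReal (κ ^ d))⁻¹ := by
    rw [hd, ENNReal.rpow_natCast]
    change (ENNReal.ofReal κ⁻¹) ^ d = _
    rw [ENNReal.ofReal_inv_of_pos hκ, ← ENNReal.inv_pow, ENNReal.ofReal_pow hκ.le]
  rw [h3] at h2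
  refine h2.trans (mul_le_mul_right (measure_mono ?_) _)
  rintro _ ⟨x, hx, rfl⟩
  exact hx.2

/-- The monotonicity of `T` passes to `T_t`, with the quantitative gain `1 - t`. -/
theorem Tt_strong_mono {G : Set (Ed d)} {T : Ed d → Ed d}
    (hmono : ∀ x ∈ G, ∀ y ∈ G, 0 ≤ inner ℝ (T y - T x) (y - x)) {t : ℝ} (ht : 0 ≤ t)
    {x y : Ed d} (hx : x ∈ G) (hy : y ∈ G) :
    (1 - t) * ‖x - y‖ ^ 2 ≤ inner ℝ (Tt T t x - Tt T t y) (x - y) := by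
  have h : Tt T t x - Tt T t y = (1 - t) • (x - y) + t • (T x - T y) := by
    simp only [Tt, smul_sub]; abel
  rw [h, inner_add_left, real_inner_smul_left, real_inner_smul_left, real_inner_self_eq_norm_sq]
  have := mul_nonneg ht (hmono y hy x hx)
  linarith

theorem Tt_expand {G : Set (Ed d)} {T : Ed d → Ed d}
    (hmono : ∀ x ∈ G, ∀ y ∈ G, 0 ≤ inner ℝ (T y - T x) (y - x)) {t : ℝ} (ht : 0 ≤ t) :
    ∀ x ∈ G, ∀ y ∈ G, (1 - t) * ‖x - y‖ ≤ ‖Tt T t x - Tt T t y‖ := by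
  intro x hx y hy
  have h1 := Tt_strong_mono hmono ht hx hy
  have h2 := real_inner_le_norm (Tt T t x - Tt T t y) (x - y)
  rcases eq_or_lt_of_le (norm_nonneg (x - y)) with h | h
  · rw [← h]; simp
  · refine le_of_mul_le_mul_right ?_ h
    nlinarith

/-! ### Interior displacement bound -/

/-- One-sided consequence of monotonicity: the displacement at `y` is controlled by the
displacement at any point of the ball of radius `r` lying at distance `2 r` from `y` in the
direction of the displacement `T y - y`. -/
theorem displacement_compare {T : Ed d → Ed d} {x y e : Ed d} {r : ℝ} (hr : 0 < r)
    (he : ‖e‖ = 1) (hye : T y - y = ‖T y - y‖ • e) (hx : ‖x - (y + (2 * r) • e)‖ ≤ r)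
    (hmono : 0 ≤ inner ℝ (T y - T x) (y - x)) :
    ‖T y - y‖ ≤ 3 * ‖T x - x‖ + 9 * r := by
  set h := x - (y + (2 * r) • e) with hh
  have hxy : x - y = (2 * r) • e + h := by rw [hh]; abel
  have hn : ‖x - y‖ ≤ 3 * r := by
    rw [hxy]
    refine (norm_add_le _ _).trans ?_
    rw [norm_smul, he, Real.norm_of_nonneg (by positivity)]
    linarith
  have h1 : inner ℝ (T y - T x) (y - x) =
      inner ℝ (T x - x) (x - y) - inner ℝ (T y - y) (x - y) + ‖x - y‖ ^ 2 := by
    rw [← real_inner_self_eq_norm_sq, ← inner_sub_left, ← inner_add_left, ← neg_sub x y,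
      inner_neg_right, ← inner_neg_left]
    congr 1; abel
  have h2 : inner ℝ (T x - x) (x - y) ≤ ‖T x - x‖ * (3 * r) :=
    (real_inner_le_norm _ _).trans (mul_le_mul_of_nonneg_left hn (norm_nonneg _))
  have h3 : ‖T y - y‖ * r ≤ inner ℝ (T y - y) (x - y) := by
    rw [hye, norm_smul, he, norm_norm, mul_one, real_inner_smul_left]
    refine mul_le_mul_of_nonneg_left ?_ (norm_nonneg _)
    rw [hxy, inner_add_right, real_inner_smul_right, real_inner_self_eq_norm_sq, he]
    have := neg_le_of_abs_le (abs_real_inner_le_norm e h)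
    rw [he] at this
    linarith
  have h4 : ‖x - y‖ ^ 2 ≤ (3 * r) ^ 2 := by gcongr
  refine le_of_mul_le_mul_right ?_ hr
  rw [h1] at hmono
  nlinarith

/-- The interior `L^∞` bound at a scale `r` with `E ≤ r ^ (d + 2)`. -/
theorem displacement_scale (hd : 0 < d) {Ω G : Set (Ed d)} {T : Ed d → Ed d} (hTm : Measurable T)
    (hG : ∀ᵐ x ∂(volume.restrict Ω), x ∈ G) (hB : ball (0 : Ed d) 2 ⊆ Ω)
    (hmono : ∀ x ∈ G, ∀ y ∈ G, 0 ≤ inner ℝ (T y - T x) (y - x))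
    (hfin : ∫⁻ x in ball (0 : Ed d) 2, ENNReal.ofReal (‖T x - x‖ ^ 2) ≠ ∞)
    {r : ℝ} (hr : 0 < r) (hr' : r ≤ 1 / 12)
    (hE : (∫⁻ x in ball (0 : Ed d) 2, ENNReal.ofReal (‖T x - x‖ ^ 2)).toReal ≤ r ^ (d + 2))
    {y : Ed d} (hy : y ∈ G) (hy' : ‖y‖ < 7 / 4) :
    ‖T y - y‖ ≤ (3 * √(volume (ball (0 : Ed d) 1)).toReal⁻¹ + 9) * r := by
  have : Nonempty (Fin d) := ⟨⟨0, hd⟩⟩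
  set ω := (volume (ball (0 : Ed d) 1)).toReal with hω
  set En := ∫⁻ x in ball (0 : Ed d) 2, ENNReal.ofReal (‖T x - x‖ ^ 2) with hEn
  have hω0 : 0 < ω := ENNReal.toReal_pos (measure_ball_pos _ _ one_pos).ne' measure_ball_lt_top.ne
  obtain ⟨e, he, hye⟩ : ∃ e : Ed d, ‖e‖ = 1 ∧ T y - y = ‖T y - y‖ • e := by
    by_cases h0 : T y - y = 0
    · exact ⟨EuclideanSpace.single ⟨0, hd⟩ 1, by simp, by simp [h0]⟩
    · have := norm_ne_zero_iff.2 h0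
      refine ⟨‖T y - y‖⁻¹ • (T y - y), by rw [norm_smul, norm_inv, norm_norm]; field_simp, ?_⟩
      rw [smul_smul, mul_inv_cancel₀ this, one_smul]
  set c := y + (2 * r) • e with hc
  have hsub : ball c r ⊆ ball (0 : Ed d) 2 := by
    refine ball_subset_ball' ?_
    rw [dist_zero_right]
    have : ‖c‖ ≤ ‖y‖ + 2 * r := by
      refine (norm_add_le _ _).trans ?_
      rw [norm_smul, he, Real.norm_of_nonneg (by positivity), mul_one]
    linarith
  have hvol : volume (ball c r) = ENNReal.ofReal (r ^ d * ω) := by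
    rw [Measure.addHaar_ball _ _ hr.le, ENNReal.ofReal_mul (by positivity), hω,
      ENNReal.ofReal_toReal measure_ball_lt_top.ne]
    simp
  have hfm : IsFiniteMeasure (volume.restrict (ball c r)) :=
    ⟨by rw [Measure.restrict_apply_univ]; exact measure_ball_lt_top⟩
  have hpos : volume.restrict (ball c r) ≠ 0 := by
    rw [Ne, Measure.restrict_eq_zero]
    exact (measure_ball_pos _ _ hr).ne'
  have hN : volume.restrict (ball c r) (G ∩ ball c r)ᶜ = 0 := by
    have h1 : ∀ᵐ x ∂(volume.restrict (ball c r)), x ∈ G :=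
      ae_restrict_of_ae_restrict_of_subset (hsub.trans hB) hG
    have h2 : ∀ᵐ x ∂(volume.restrict (ball c r)), x ∈ G ∩ ball c r := by
      filter_upwards [h1, ae_restrict_mem measurableSet_ball] with x hx hx' using ⟨hx, hx'⟩
    exact h2
  obtain ⟨x, hxN, hx⟩ := exists_notMem_null_le_laverage hpos
    (f := fun x => ENNReal.ofReal (‖T x - x‖ ^ 2)) (Measurable.aemeasurable (by fun_prop)) hN
  rw [notMem_compl_iff] at hxN
  have hxE : ‖T x - x‖ ^ 2 ≤ r ^ 2 * ω⁻¹ := by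
    have h1 : ENNReal.ofReal (‖T x - x‖ ^ 2) ≤ ENNReal.ofReal (r ^ (d + 2) / (r ^ d * ω)) := by
      refine hx.trans ?_
      rw [laverage_eq, Measure.restrict_apply_univ, hvol, ENNReal.ofReal_div_of_pos (by positivity)]
      refine ENNReal.div_le_div_right ?_ _
      refine (lintegral_mono_set hsub).trans ?_
      rw [← hEn, ← ENNReal.ofReal_toReal hfin]
      exact ENNReal.ofReal_le_ofReal hE
    rw [ENNReal.ofReal_le_ofReal_iff (by positivity)] at h1
    refine h1.trans (le_of_eq ?_)
    rw [pow_add]; field_simp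
  have hxE' : ‖T x - x‖ ≤ r * √ω⁻¹ := by
    refine abs_le_of_sq_le_sq' ?_ (by positivity) |>.2
    rwa [mul_pow, Real.sq_sqrt (by positivity)]
  have := displacement_compare hr he hye
    (by rw [← dist_eq_norm]; exact (mem_ball.1 hxN.2).le) (hmono x hxN.1 y hy)
  linarith

/-- The interior `L^∞` bound `|T - id| ≲ E ^ (1 / (d + 2))`. -/
theorem displacement_bound (hd : 0 < d) {Ω G : Set (Ed d)} {T : Ed d → Ed d} (hTm : Measurable T)
    (hG : ∀ᵐ x ∂(volume.restrict Ω), x ∈ G) (hB : ball (0 : Ed d) 2 ⊆ Ω)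
    (hmono : ∀ x ∈ G, ∀ y ∈ G, 0 ≤ inner ℝ (T y - T x) (y - x))
    (hfin : ∫⁻ x in ball (0 : Ed d) 2, ENNReal.ofReal (‖T x - x‖ ^ 2) ≠ ∞)
    (hδ : (∫⁻ x in ball (0 : Ed d) 2, ENNReal.ofReal (‖T x - x‖ ^ 2)).toReal ^
      ((1 : ℝ) / (d + 2)) < 1 / 12)
    {y : Ed d} (hy : y ∈ G) (hy' : ‖y‖ < 7 / 4) :
    ‖T y - y‖ ≤ (3 * √(volume (ball (0 : Ed d) 1)).toReal⁻¹ + 9) *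
      (∫⁻ x in ball (0 : Ed d) 2, ENNReal.ofReal (‖T x - x‖ ^ 2)).toReal ^
      ((1 : ℝ) / (d + 2)) := by
  have hEn0 : 0 ≤ (∫⁻ x in ball (0 : Ed d) 2, ENNReal.ofReal (‖T x - x‖ ^ 2)).toReal :=
    ENNReal.toReal_nonneg
  have hscale := fun {r : ℝ} => displacement_scale (r := r) hd hTm hG hB hmono hfin
  set En := (∫⁻ x in ball (0 : Ed d) 2, ENNReal.ofReal (‖T x - x‖ ^ 2)).toReal with hEn
  set C₀ := 3 * √(volume (ball (0 : Ed d) 1)).toReal⁻¹ + 9 with hC₀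
  have hC : 0 < C₀ := by positivity
  set δ := En ^ ((1 : ℝ) / (d + 2)) with hδd
  have hδ0 : 0 ≤ δ := by positivity
  have hδE : δ ^ (d + 2) = En := by
    rw [hδd, ← Real.rpow_natCast, ← Real.rpow_mul hEn0]
    push_cast
    rw [one_div, inv_mul_cancel₀ (by positivity), Real.rpow_one]
  -- passing to the limit `r ↓ δ` covers the degenerate case `δ = 0`
  by_contra hcon
  rw [not_le] at hcon
  have hlt : δ < min (‖T y - y‖ / C₀) (1 / 12) := by
    refine lt_min ?_ hδ
    rw [lt_div_iff₀ hC]; linarith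
  obtain ⟨r, hr1, hr2⟩ := exists_between hlt
  rw [lt_min_iff, lt_div_iff₀ hC] at hr2
  have := hscale (hδ0.trans_lt hr1) hr2.2.le
    (by rw [← hδE]; exact pow_le_pow_left₀ hδ0 hr1.le _) hy hy'
  linarith

/-! ### Localization -/

/-- Points outside `B_{7/4}` are not transported into `B_{3/2}`: monotonicity is tested against a
point `y ∈ G` close to `(13/8) x / |x|`, which is almost fixed by `T_t`. -/
theorem norm_lt_of_Tt_mem {Ω G : Set (Ed d)} {T : Ed d → Ed d}
    (hG : ∀ᵐ x ∂(volume.restrict Ω), x ∈ G) (hB : ball (0 : Ed d) 2 ⊆ Ω)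
    (hmono : ∀ x ∈ G, ∀ y ∈ G, 0 ≤ inner ℝ (T y - T x) (y - x))
    (hdis : ∀ y ∈ G, ‖y‖ < 7 / 4 → ‖T y - y‖ ≤ 1 / 100)
    {t : ℝ} (ht : 0 ≤ t) (ht1 : t ≤ 1) {x : Ed d} (hx : x ∈ G)
    (hxt : Tt T t x ∈ ball (0 : Ed d) (3 / 2)) : ‖x‖ < 7 / 4 := by
  by_contra hcon
  rw [not_lt] at hcon
  have hx0 : ‖x‖ ≠ 0 := by linarith
  set e := ‖x‖⁻¹ • x with he_def
  have he : ‖e‖ = 1 := by rw [he_def, norm_smul, norm_inv, norm_norm]; field_simp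
  have hxe : x = ‖x‖ • e := by rw [he_def, smul_smul, mul_inv_cancel₀ hx0, one_smul]
  set z := (13 / 8 : ℝ) • e with hz
  have hzn : ‖z‖ = 13 / 8 := by rw [hz, norm_smul, he]; norm_num
  obtain ⟨y, hyG, hyz⟩ : ∃ y ∈ G, y ∈ ball z (1 / 1000) := by
    have hsub : ball z (1 / 1000) ⊆ Ω := by
      refine Subset.trans (ball_subset_ball' ?_) hB
      rw [dist_zero_right, hzn]; norm_num
    have h1 := ae_restrict_of_ae_restrict_of_subset hsub hG
    rw [ae_restrict_iff' measurableSet_ball] at h1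
    obtain ⟨y, hy1, hy2⟩ := ((frequently_ae_mem_iff.2
      (measure_ball_pos volume z (show (0 : ℝ) < 1 / 1000 by norm_num)).ne').and_eventually
        h1).exists
    exact ⟨y, hy2 hy1, hy1⟩
  rw [mem_ball, dist_eq_norm] at hyz
  set h := y - z with hh
  have hyh : y = z + h := by rw [hh]; abel
  have hyn : ‖y‖ < 7 / 4 := by
    have := norm_add_le z h
    rw [← hyh] at this
    linarith
  have hq := hdis y hyG hyn
  set p := Tt T t x with hp
  set q := Tt T t y with hqd
  rw [mem_ball_zero_iff] at hxt
  have hqy : ‖q - y‖ ≤ 1 / 100 := by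
    have : q - y = t • (T y - y) := by
      rw [hqd]; simp only [Tt, smul_sub, sub_smul, one_smul]; abel
    rw [this, norm_smul, Real.norm_of_nonneg ht]
    nlinarith [norm_nonneg (T y - y)]
  have hqn : ‖q‖ ≤ 2 := by
    have := norm_add_le (q - y) y
    rw [sub_add_cancel] at this
    linarith
  have hm : 0 ≤ inner ℝ (p - q) (x - y) :=
    le_trans (mul_nonneg (by linarith) (by positivity)) (Tt_strong_mono hmono ht hx hyG)
  have hxy : x - y = (‖x‖ - 13 / 8) • e - h := by
    rw [sub_smul, ← hxe, hh]; abel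
  rw [hxy, inner_sub_right, real_inner_smul_right] at hm
  have h1 : inner ℝ p e ≤ 3 / 2 := by
    have := real_inner_le_norm p e
    rw [he] at this; linarith
  have h2 : 13 / 8 - 1 / 1000 - 1 / 100 ≤ inner ℝ q e := by
    have e1 : q = (q - y) + z + h := by rw [hh]; abel
    have e2 : inner ℝ z e = 13 / 8 := by
      rw [hz, real_inner_smul_left, real_inner_self_eq_norm_sq, he]; norm_num
    rw [e1, inner_add_left, inner_add_left, e2]
    have h3 := neg_le_of_abs_le (abs_real_inner_le_norm (q - y) e)
    have h4 := neg_le_of_abs_le (abs_real_inner_le_norm h e)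
    rw [he] at h3 h4
    linarith
  have h5 : -(4 / 1000) ≤ inner ℝ (p - q) h := by
    have h6 := neg_le_of_abs_le (abs_real_inner_le_norm (p - q) h)
    have h7 : ‖p - q‖ * ‖h‖ ≤ 4 * (1 / 1000) := by
      refine mul_le_mul ?_ hyz.le (norm_nonneg _) (by norm_num)
      linarith [norm_sub_le p q]
    linarith
  rw [inner_sub_left] at hm
  nlinarith

end aux

/-! ### The bounds on densities and fluxes -/

/-- `L^∞` bounds for the interpolant densities and fluxes: if
`E = ∫_{B₂}|T−x|² ≪ 1` then for a.e. `t ∈ (0,1)`, on `B_{3/2}` one has `ρ_t ≤ (1−t)^{−d}`,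
`|j_t| ≲ E^{1/(d+2)}(1−t)^{−d}`, `∫_{B_{3/2}}(1/ρ_t)|j_t|² ≤ E` and `∫_{B_{3/2}} ρ_t ≲ 1`.
Here `ρ_t` and `j_t` are expressed through their defining pushforward formulas. -/
theorem interpolant_density_flux_bounds (d : ℕ) (hd : 2 ≤ d) :
    ∃ ε₀ C : ℝ, 0 < ε₀ ∧ 0 < C ∧
    ∀ (Ω : Set (Ed d)) (μ : Measure (Ed d)) (T : Ed d → Ed d),
      Bornology.IsBounded Ω → MeasurableSet Ω → ball (0 : Ed d) 2 ⊆ Ω →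
      (∃ K : Set (Ed d), IsCompact K ∧ μ Kᶜ = 0) → μ Set.univ = volume Ω →
      IsOptMap Ω μ T →
      (∫⁻ x in ball (0 : Ed d) 2, ENNReal.ofReal (‖T x - x‖ ^ 2)) ≤ ENNReal.ofReal ε₀ →
      ∀ᵐ t ∂(volume.restrict (Ioo (0:ℝ) 1)),
        -- density bound `ρ_t ≤ (1−t)^{−d}` on `B_{3/2}`:
        ((Measure.map (Tt T t) (volume.restrict Ω)).restrict (ball (0 : Ed d) (3/2))
            ≤ (ENNReal.ofReal ((1 - t) ^ d))⁻¹ • volume) ∧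
        -- flux bound `|j_t| ≲ E^{1/(d+2)}(1−t)^{−d}` on `B_{3/2}`:
        (∀ A : Set (Ed d), MeasurableSet A → A ⊆ ball (0 : Ed d) (3/2) →
          ‖∫ x in Ω ∩ (Tt T t) ⁻¹' A, (T x - x)‖ ≤
            C * ((∫⁻ x in ball (0 : Ed d) 2,
                  ENNReal.ofReal (‖T x - x‖ ^ 2)).toReal ^ ((1:ℝ) / (d + 2))) *
              ((1 - t) ^ d)⁻¹ * (volume A).toReal) ∧
        -- kinetic energy bound `∫_{B_{3/2}} (1/ρ_t)|j_t|² ≤ E`: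
        ((∫⁻ x in Ω ∩ (Tt T t) ⁻¹' (ball (0 : Ed d) (3/2)),
            ENNReal.ofReal (‖T x - x‖ ^ 2))
          ≤ ∫⁻ x in ball (0 : Ed d) 2, ENNReal.ofReal (‖T x - x‖ ^ 2)) ∧
        -- mass bound `∫_{B_{3/2}} ρ_t ≲ 1`:
        (Measure.map (Tt T t) (volume.restrict Ω)) (ball (0 : Ed d) (3/2))
          ≤ ENNReal.ofReal C := by
  have hd0 : 0 < d := by omega
  set C₀ := 3 * √(volume (ball (0 : Ed d) 1)).toReal⁻¹ + 9 with hC₀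
  have hC₀9 : 9 ≤ C₀ := by
    have : 0 ≤ 3 * √(volume (ball (0 : Ed d) 1)).toReal⁻¹ := by positivity
    linarith
  have hC₀0 : 0 < C₀ := by linarith
  set V := (volume (ball (0 : Ed d) 2)).toReal with hV
  have hV0 : 0 ≤ V := ENNReal.toReal_nonneg
  -- `ε₀` is chosen so that `C₀ * E ^ (1 / (d + 2)) ≤ 1 / 100`; as `9 ≤ C₀`, this also yields
  -- `E ^ (1 / (d + 2)) < 1 / 12`
  refine ⟨(1 / (100 * C₀)) ^ (d + 2), C₀ + V, by positivity, by positivity, ?_⟩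
  intro Ω μ T hb hΩ hB hK _ hT hE
  have hTm := hT.1
  have hfinΩ := cost_ne_top hb hΩ hK hT
  obtain ⟨G, hG, hmono⟩ := exists_monotone_set hfinΩ hΩ hT
  have hfin := ne_top_of_le_ne_top hfinΩ (lintegral_mono_set hB)
  have hbound := fun {y : Ed d} => displacement_bound (y := y) hd0 hTm hG hB hmono hfin
  set En := ∫⁻ x in ball (0 : Ed d) 2, ENNReal.ofReal (‖T x - x‖ ^ 2) with hEn
  set δ := En.toReal ^ ((1 : ℝ) / (d + 2)) with hδ
  have hδ0 : 0 ≤ δ := Real.rpow_nonneg ENNReal.toReal_nonneg _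
  have hδC : δ ≤ 1 / (100 * C₀) := by
    have h1 : En.toReal ≤ (1 / (100 * C₀)) ^ (d + 2) :=
      ENNReal.toReal_le_of_le_ofReal (by positivity) hE
    have h2 := Real.rpow_le_rpow ENNReal.toReal_nonneg h1
      (show (0 : ℝ) ≤ (1 : ℝ) / (d + 2) by positivity)
    refine h2.trans (le_of_eq ?_)
    rw [← Real.rpow_natCast, ← Real.rpow_mul (by positivity)]
    push_cast
    rw [mul_one_div_cancel (by positivity), Real.rpow_one]
  rw [le_div_iff₀ (by positivity)] at hδC
  have hdis : ∀ y ∈ G, ‖y‖ < 7 / 4 → ‖T y - y‖ ≤ C₀ * δ := fun y hy hy' =>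
    hbound (by nlinarith) hy hy'
  have hdis' : ∀ y ∈ G, ‖y‖ < 7 / 4 → ‖T y - y‖ ≤ 1 / 100 := fun y hy hy' =>
    (hdis y hy hy').trans (by linarith)
  filter_upwards [ae_restrict_mem measurableSet_Ioo] with t ht
  have ht0 := ht.1
  have ht1 : 0 < 1 - t := by linarith [ht.2]
  have hTtm : Measurable (Tt T t) := by unfold Tt; fun_prop
  have hloc : ∀ x ∈ G, Tt T t x ∈ ball (0 : Ed d) (3 / 2) → ‖x‖ < 7 / 4 := fun x hx hxt =>
    norm_lt_of_Tt_mem hG hB hmono hdis' ht0.le ht.2.le hx hxt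
  have hG' : ∀ᵐ x, x ∈ Ω → x ∈ G := (ae_restrict_iff' hΩ).1 hG
  have hvol : ∀ A, volume (Ω ∩ Tt T t ⁻¹' A) ≤
      (ENNReal.ofReal ((1 - t) ^ d))⁻¹ * volume A := fun A => by
    refine le_trans (measure_mono_ae ?_)
      (volume_preimage_le ht1 (Tt_expand hmono ht0.le) A)
    filter_upwards [hG'] with x hx hxΩ using ⟨hx hxΩ.1, hxΩ.2⟩
  have hsub : ∀ᵐ x, x ∈ Ω ∩ Tt T t ⁻¹' ball (0 : Ed d) (3 / 2) → x ∈ ball (0 : Ed d) 2 := by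
    filter_upwards [hG'] with x hx hxΩ
    exact mem_ball_zero_iff.2 ((hloc x (hx hxΩ.1) hxΩ.2).trans (by norm_num))
  refine ⟨?_, ?_, ?_, ?_⟩
  · refine Measure.le_iff.2 fun A hA => ?_
    rw [Measure.restrict_apply hA, Measure.map_apply hTtm (hA.inter measurableSet_ball),
      Measure.restrict_apply (hTtm (hA.inter measurableSet_ball)), inter_comm,
      Measure.smul_apply, smul_eq_mul]
    exact (hvol _).trans (mul_le_mul_right (measure_mono inter_subset_left) _)
  · intro A hA hAB
    have hAfin : volume A ≠ ∞ := ne_top_of_le_ne_top measure_ball_lt_top.ne (measure_mono hAB)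
    have hinv : (ENNReal.ofReal ((1 - t) ^ d))⁻¹ ≠ ∞ :=
      ENNReal.inv_ne_top.2 (ENNReal.ofReal_pos.2 (by positivity)).ne'
    have hprod := ENNReal.mul_ne_top hinv hAfin
    have h1 : ‖∫ x in Ω ∩ Tt T t ⁻¹' A, (T x - x)‖ ≤
        C₀ * δ * volume.real (Ω ∩ Tt T t ⁻¹' A) := by
      refine norm_setIntegral_le_of_norm_le_const_ae' ((hvol A).trans_lt hprod.lt_top) ?_
      filter_upwards [hG'] with x hx hxΩ
      exact hdis x (hx hxΩ.1) (hloc x (hx hxΩ.1) (hAB hxΩ.2))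
    have h2 : volume.real (Ω ∩ Tt T t ⁻¹' A) ≤ ((1 - t) ^ d)⁻¹ * (volume A).toReal := by
      have := ENNReal.toReal_mono hprod (hvol A)
      rwa [ENNReal.toReal_mul, ENNReal.toReal_inv, ENNReal.toReal_ofReal (by positivity)] at this
    calc _ ≤ _ := h1
      _ ≤ C₀ * δ * (((1 - t) ^ d)⁻¹ * (volume A).toReal) := by gcongr
      _ ≤ (C₀ + V) * δ * (((1 - t) ^ d)⁻¹ * (volume A).toReal) := by gcongr; linarith
      _ = _ := by ring
  · exact lintegral_mono' (Measure.restrict_mono_ae (t := ball (0 : Ed d) 2) hsub) le_rfl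
  · rw [Measure.map_apply hTtm measurableSet_ball,
      Measure.restrict_apply (hTtm measurableSet_ball), inter_comm]
    refine (measure_mono_ae (t := ball (0 : Ed d) 2) hsub).trans ?_
    rw [← ENNReal.ofReal_toReal (measure_ball_lt_top (μ := volume)
      (x := (0 : Ed d)) (r := 2)).ne]
    exact ENNReal.ofReal_le_ofReal (by linarith)
end
end

section
/- Let d ≥ 2 and let φ be harmonic on a neighborhood of the closed unit ball B̄₁ ⊂ ℝ^d with ∫_{∂B₁} φ = 0. Then, with p := 2d/(d−1), (∫_{B₁} |φ|^p)^{1/p} ≲ (∫_{∂B₁} φ²)^{1/2}. -/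
/-!
The map taking boundary values to the harmonic extension is integration against the Poisson kernel
`P(x, ω) = (1 - ‖x‖²) / (|∂B₁| ‖x - ω‖^d)`, and the theorem is the boundedness of this operator from
`L²(∂B₁)` to `L^{2d/(d-1)}(B₁)`.

The operator is bounded from `L^∞` to `L^∞` because `∫ P(x, ω) dω = 1` (`lintegral_pkE`). Moreover
`P(x, ω) ≤ C ‖x - ω‖^{1-d}`, and this kernel integrates over a set `E` of finite measure to at most
`C |E|^{1/d}`, uniformly in `ω` (`setLIntegral_pkE`); by Tonelli, this is a bound from `L¹` to weak
`L^{d/(d-1)}` (`kernel_weak_type`). Marcinkiewicz interpolation half way between the two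
(`interpolation`) gives `L² → L^{2d/(d-1)}`.

Poisson's formula (`poisson_representation`) is derived from the maximum principle. The kernel is
harmonic in `x`, its integral over the sphere is invariant under rotations and harmonic, hence
constant, and the kernel concentrates at the boundary, so that the Poisson integral of `φ` and `φ`
itself are two harmonic functions with the same boundary values. Harmonicity enters only through
second derivatives along coordinate lines (`LineLap`).

The surface measure used for the Poisson integral is `Measure.toSphere`, which measures cones; it is
bounded by a multiple of the Hausdorff measure (`toSphere_lintegral_le`), which is the only
comparison the estimate needs.
-/

open MeasureTheory Measure Set Metric
open scoped ENNReal NNReal Topology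

noncomputable section

/-- Laplacian of a real-valued function on Euclidean space. -/
def lap {d : ℕ} (f : Ed d → ℝ) (x : Ed d) : ℝ :=
  ∑ i : Fin d, fderiv ℝ (fun y => fderiv ℝ f y (EuclideanSpace.single i (1:ℝ))) x
      (EuclideanSpace.single i (1:ℝ))

/-! ### Real interpolation for a positive integral operator -/

/-- Weak-type `(1, d/(d-1))` bound: integrating over the super-level set `E` and exchanging the
integrals gives `t μ(E) ≤ B ‖h‖₁ μ(E)^{1/d}`, which is solved for `μ(E)`. -/
lemma kernel_weak_type {X S : Type*} [MeasurableSpace X] [MeasurableSpace S]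
    (μ : Measure X) [IsFiniteMeasure μ] (σ : Measure S) [IsFiniteMeasure σ]
    (K : X → S → ℝ≥0∞) (hK : Measurable (Function.uncurry K)) (d : ℕ) (hd : 2 ≤ d)
    (B : ℝ≥0∞)
    (h2 : ∀ E, MeasurableSet E → ∀ ω, ∫⁻ x in E, K x ω ∂μ ≤ B * μ E ^ (1 / (d : ℝ)))
    (h : S → ℝ≥0∞) (hh : Measurable h) (t : ℝ≥0∞) (ht : t ≠ 0) (ht' : t ≠ ⊤) :
    μ {x | t < ∫⁻ ω, K x ω * h ω ∂σ} ≤ (B * (∫⁻ ω, h ω ∂σ) / t) ^ ((d : ℝ) / (d - 1)) := by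
  have hd' : (2 : ℝ) ≤ d := by exact_mod_cast hd
  set E := {x | t < ∫⁻ ω, K x ω * h ω ∂σ} with hE
  have hmeas : Measurable (fun x => ∫⁻ ω, K x ω * h ω ∂σ) :=
    (hK.mul (hh.comp measurable_snd)).lintegral_prod_right'
  have hEm : MeasurableSet E := measurableSet_lt measurable_const hmeas
  have key : t * μ E ≤ B * (∫⁻ ω, h ω ∂σ) * μ E ^ (1 / (d : ℝ)) := by
    calc t * μ E = ∫⁻ x in E, t ∂μ := by simp
      _ ≤ ∫⁻ x in E, ∫⁻ ω, K x ω * h ω ∂σ ∂μ :=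
          setLIntegral_mono hmeas (fun x hx => le_of_lt hx)
      _ = ∫⁻ ω, ∫⁻ x in E, K x ω * h ω ∂μ ∂σ :=
          lintegral_lintegral_swap (hK.mul (hh.comp measurable_snd)).aemeasurable
      _ ≤ ∫⁻ ω, (B * μ E ^ (1 / (d : ℝ))) * h ω ∂σ := by
          refine lintegral_mono fun ω => ?_
          have hKω : Measurable (fun x => K x ω) :=
            hK.comp (measurable_id.prodMk measurable_const)
          rw [lintegral_mul_const _ hKω]
          gcongr
          exact h2 E hEm ω
      _ = _ := by rw [lintegral_const_mul _ hh]; ring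
  rcases eq_or_ne (μ E) 0 with h0 | h0
  · simp [h0]
  have htop : μ E ≠ ⊤ := measure_ne_top _ _
  have hne : (1 - 1 / (d : ℝ)) * ((d : ℝ) / (d - 1)) = 1 := by
    have : (d : ℝ) - 1 ≠ 0 := by linarith
    have : (d : ℝ) ≠ 0 := by linarith
    field_simp
  have e1 : μ E = (μ E ^ (1 - 1 / (d : ℝ))) ^ ((d : ℝ) / (d - 1)) := by
    rw [← ENNReal.rpow_mul, hne, ENNReal.rpow_one]
  rw [e1]
  refine ENNReal.rpow_le_rpow ?_ (div_nonneg (by linarith) (by linarith))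
  rw [ENNReal.le_div_iff_mul_le (Or.inl ht) (Or.inl ht'), ENNReal.rpow_sub _ _ h0 htop,
    ENNReal.rpow_one]
  have hp : μ E ^ (1 / (d : ℝ)) ≠ 0 := by simp [h0, htop]
  have hq : μ E ^ (1 / (d : ℝ)) ≠ ⊤ := ENNReal.rpow_ne_top_of_nonneg (by positivity) htop
  rw [mul_comm, ← mul_div_assoc]
  exact ENNReal.div_le_of_le_mul key

/-- Layer-cake identity: by Tonelli, `g ω` is counted for the parameters `t < 2 g ω`. -/
lemma lintegral_tail_eq {S : Type*} [MeasurableSpace S] (σ : Measure S) [IsFiniteMeasure σ]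
    (g : S → ℝ) (hg0 : ∀ ω, 0 ≤ g ω) (hgm : Measurable g) :
    ∫⁻ t in Ioi (0 : ℝ), ∫⁻ ω, {ω | t / 2 < g ω}.indicator (fun ω => ENNReal.ofReal (g ω)) ω ∂σ
      = 2 * ∫⁻ ω, ENNReal.ofReal (g ω ^ 2) ∂σ := by
  have hs : MeasurableSet {q : ℝ × S | q.1 / 2 < g q.2} :=
    measurableSet_lt (measurable_fst.div_const 2) (hgm.comp measurable_snd)
  have hm : Measurable (fun q : ℝ × S =>
      {ω | q.1 / 2 < g ω}.indicator (fun ω => ENNReal.ofReal (g ω)) q.2) := by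
    have := (hgm.comp (measurable_snd (α := ℝ))).ennreal_ofReal.indicator hs
    exact this
  rw [lintegral_lintegral_swap hm.aemeasurable, ← lintegral_const_mul _ (by fun_prop)]
  refine lintegral_congr fun ω => ?_
  have : ∀ t : ℝ, {ω | t / 2 < g ω}.indicator (fun ω => ENNReal.ofReal (g ω)) ω
      = (Iio (2 * g ω)).indicator (fun _ => ENNReal.ofReal (g ω)) t := by
    intro t
    by_cases h : t / 2 < g ω
    · rw [indicator_of_mem (show ω ∈ {ω | t / 2 < g ω} from h), indicator_of_mem]
      rw [mem_Iio]; linarith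
    · rw [indicator_of_notMem (show ω ∉ {ω | t / 2 < g ω} from h), indicator_of_notMem]
      rw [mem_Iio]; intro h'; apply h; linarith
  simp_rw [this]
  rw [lintegral_indicator measurableSet_Iio, lintegral_const,
    Measure.restrict_apply_univ, Measure.restrict_apply measurableSet_Iio, inter_comm, Ioi_inter_Iio,
    Real.volume_Ioo, sub_zero, ← ENNReal.ofReal_mul (hg0 ω)]
  rw [show (2 : ℝ≥0∞) = ENNReal.ofReal 2 by simp, ← ENNReal.ofReal_mul (by norm_num)]
  congr 1; ring

/-- Marcinkiewicz interpolation between `L^∞ → L^∞` and `L¹ → L^{d/(d-1), ∞}`. Truncating `g` at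
height `t / 2` reduces the super-level set `{t < f}` to the weak-type estimate. -/
lemma interpolation {X S : Type*} [MeasurableSpace X] [MeasurableSpace S]
    (μ : Measure X) [IsFiniteMeasure μ] (σ : Measure S) [IsFiniteMeasure σ]
    (K : X → S → ℝ≥0∞) (hK : Measurable (Function.uncurry K)) (d : ℕ) (hd : 2 ≤ d)
    (B : ℝ≥0∞)
    (h1 : ∀ᵐ x ∂μ, ∫⁻ ω, K x ω ∂σ ≤ 1)
    (h2 : ∀ E, MeasurableSet E → ∀ ω, ∫⁻ x in E, K x ω ∂μ ≤ B * μ E ^ (1 / (d : ℝ)))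
    (f : X → ℝ) (hf0 : ∀ x, 0 ≤ f x) (hfm : AEMeasurable f μ)
    (g : S → ℝ) (hg0 : ∀ ω, 0 ≤ g ω) (hgm : Measurable g)
    (hfg : ∀ᵐ x ∂μ, ENNReal.ofReal (f x) ≤ ∫⁻ ω, K x ω * ENNReal.ofReal (g ω) ∂σ) :
    ∫⁻ x, ENNReal.ofReal (f x ^ ((2 * d : ℝ) / (d - 1))) ∂μ ≤
      ENNReal.ofReal ((2 * d : ℝ) / (d - 1)) * ((2 * B) ^ ((d : ℝ) / (d - 1)) *
        (2 * ∫⁻ ω, ENNReal.ofReal (g ω ^ 2) ∂σ) ^ ((d : ℝ) / (d - 1))) := by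
  have hd' : (2 : ℝ) ≤ d := by exact_mod_cast hd
  set s : ℝ := (d : ℝ) / (d - 1) with hs
  have hs1 : 1 ≤ s := by rw [hs, le_div_iff₀ (by linarith)]; linarith
  have hp : (2 * d : ℝ) / (d - 1) = 2 * s := by rw [hs]; ring
  rw [hp, lintegral_rpow_eq_lintegral_meas_lt_mul μ (.of_forall hf0) hfm (by linarith)]
  gcongr
  set A := ∫⁻ ω, ENNReal.ofReal (g ω ^ 2) ∂σ with hA
  -- `G t` is the mass of the part of `g` above height `t / 2`; the part below contributes at most
  -- `t / 2` to `f` by `h1`.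
  set G : ℝ → ℝ≥0∞ := fun t =>
    ∫⁻ ω, {ω | t / 2 < g ω}.indicator (fun ω => ENNReal.ofReal (g ω)) ω ∂σ with hG
  have hset : ∀ t : ℝ, MeasurableSet {ω | t / 2 < g ω} := fun t =>
    measurableSet_lt measurable_const hgm
  have hlevel : ∀ t : ℝ, 0 < t → μ {a | t < f a} ≤ (B * G t / ENNReal.ofReal (t / 2)) ^ s := by
    intro t ht
    refine le_trans (measure_mono_ae ?_) (kernel_weak_type μ σ K hK d hd B h2
      ({ω | t / 2 < g ω}.indicator (fun ω => ENNReal.ofReal (g ω)))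
      (hgm.ennreal_ofReal.indicator (hset t)) (ENNReal.ofReal (t / 2)) (by simp; linarith) (by simp))
    filter_upwards [h1, hfg] with x hx1 hx2 hx3
    change ENNReal.ofReal (t / 2) < _
    by_contra hcon
    rw [not_lt] at hcon
    have hx3 : t < f x := hx3
    have h4 : ∫⁻ ω, K x ω * ENNReal.ofReal (g ω) ∂σ ≤
        ENNReal.ofReal (t / 2) + ENNReal.ofReal (t / 2) := by
      calc ∫⁻ ω, K x ω * ENNReal.ofReal (g ω) ∂σ
          ≤ ∫⁻ ω, (K x ω * {ω | t / 2 < g ω}.indicator (fun ω => ENNReal.ofReal (g ω)) ω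
              + K x ω * ENNReal.ofReal (t / 2)) ∂σ := by
            refine lintegral_mono fun ω => ?_
            by_cases h : t / 2 < g ω
            · rw [indicator_of_mem (show ω ∈ {ω | t / 2 < g ω} from h)]
              exact le_self_add
            · refine le_trans ?_ le_add_self
              gcongr
              exact not_lt.1 h
        _ = (∫⁻ ω, K x ω * {ω | t / 2 < g ω}.indicator (fun ω => ENNReal.ofReal (g ω)) ω ∂σ)
              + (∫⁻ ω, K x ω ∂σ) * ENNReal.ofReal (t / 2) := by
            have hKx : Measurable (K x) := hK.comp (measurable_const.prodMk measurable_id)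
            have hm2 : Measurable (fun ω => K x ω *
                {ω | t / 2 < g ω}.indicator (fun ω => ENNReal.ofReal (g ω)) ω) :=
              hKx.mul (hgm.ennreal_ofReal.indicator (hset t))
            rw [lintegral_add_left hm2, lintegral_mul_const _ hKx]
        _ ≤ ENNReal.ofReal (t / 2) + 1 * ENNReal.ofReal (t / 2) := by gcongr
        _ = _ := by rw [one_mul]
    have h5 := hx2.trans h4
    rw [← ENNReal.ofReal_add (by linarith) (by linarith), add_halves,
      ENNReal.ofReal_le_ofReal_iff ht.le] at h5
    linarith
  have hcheb : ∀ t : ℝ, 0 < t → ENNReal.ofReal t * G t ≤ 2 * A := by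
    intro t ht
    rw [hG, hA, ← lintegral_const_mul _ (hgm.ennreal_ofReal.indicator (hset t)),
      ← lintegral_const_mul _ (by fun_prop)]
    refine lintegral_mono fun ω => ?_
    by_cases h : t / 2 < g ω
    · simp only [indicator_of_mem (show ω ∈ {ω | t / 2 < g ω} from h)]
      rw [show (2 : ℝ≥0∞) = ENNReal.ofReal 2 by simp, ← ENNReal.ofReal_mul ht.le,
        ← ENNReal.ofReal_mul (by norm_num)]
      apply ENNReal.ofReal_le_ofReal
      nlinarith [hg0 ω]
    · simp only [indicator_of_notMem (show ω ∉ {ω | t / 2 < g ω} from h)]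
      simp
  -- Of the `s` factors `G t`, all but one are absorbed by the Chebyshev bound `hcheb`; the last one
  -- is integrated exactly.
  calc ∫⁻ t in Ioi (0 : ℝ), μ {a | t < f a} * ENNReal.ofReal (t ^ (2 * s - 1))
      ≤ ∫⁻ t in Ioi (0 : ℝ), ((2 * B) ^ s * (2 * A) ^ (s - 1)) * G t := by
        refine setLIntegral_mono' measurableSet_Ioi fun t (ht : 0 < t) => ?_
        have htt : ENNReal.ofReal t ≠ 0 := by simpa using ht
        have hG1 : G t ^ s = G t ^ (s - 1) * G t := by
          conv_lhs => rw [show s = (s - 1) + 1 by ring]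
          rw [ENNReal.rpow_add_of_nonneg _ _ (by linarith) (by norm_num), ENNReal.rpow_one]
        calc μ {a | t < f a} * ENNReal.ofReal (t ^ (2 * s - 1))
            ≤ (B * G t / ENNReal.ofReal (t / 2)) ^ s * ENNReal.ofReal (t ^ (2 * s - 1)) := by
              gcongr; exact hlevel t ht
          _ = (2 * B) ^ s * ((ENNReal.ofReal t * G t) ^ (s - 1) * G t) := by
              have e : B * G t / ENNReal.ofReal (t / 2)
                  = (2 * B) * G t * (ENNReal.ofReal t)⁻¹ := by
                rw [ENNReal.ofReal_div_of_pos (by norm_num), div_eq_mul_inv, div_eq_mul_inv,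
                  ENNReal.mul_inv (by simp) (by simp), inv_inv]
                simp only [ENNReal.ofReal_ofNat]
                ring
              have hs0 : 0 ≤ s := by linarith
              rw [e, ENNReal.mul_rpow_of_nonneg _ _ hs0, ENNReal.mul_rpow_of_nonneg _ _ hs0,
                ENNReal.mul_rpow_of_nonneg _ _ (by linarith : 0 ≤ s - 1), hG1,
                ENNReal.ofReal_rpow_of_pos ht |>.symm, ENNReal.inv_rpow]
              have : ENNReal.ofReal t ^ (2 * s - 1)
                  = ENNReal.ofReal t ^ s * ENNReal.ofReal t ^ (s - 1) := by
                rw [← ENNReal.rpow_add _ _ htt (by simp)]; congr 1; ring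
              rw [this]
              have hc : (ENNReal.ofReal t ^ s)⁻¹ * ENNReal.ofReal t ^ s = 1 :=
                ENNReal.inv_mul_cancel (by simp [ht])
                  (ENNReal.rpow_ne_top_of_nonneg hs0 (by simp))
              calc _ = (2 * B) ^ s * (G t ^ (s - 1) * G t) * ENNReal.ofReal t ^ (s - 1) *
                    ((ENNReal.ofReal t ^ s)⁻¹ * ENNReal.ofReal t ^ s) := by ring
                _ = _ := by rw [hc]; ring
          _ ≤ (2 * B) ^ s * ((2 * A) ^ (s - 1) * G t) := by
              gcongr (2 * B) ^ s * (?_ * G t)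
              exact ENNReal.rpow_le_rpow (hcheb t ht) (by linarith)
          _ = _ := by ring
    _ = ((2 * B) ^ s * (2 * A) ^ (s - 1)) * (2 * A) := by
        rw [lintegral_const_mul _ ?_, lintegral_tail_eq σ g hg0 hgm]
        have hs' : MeasurableSet {q : ℝ × S | q.1 / 2 < g q.2} :=
          measurableSet_lt (measurable_fst.div_const 2) (hgm.comp measurable_snd)
        have hm : Measurable (fun q : ℝ × S =>
            {ω | q.1 / 2 < g ω}.indicator (fun ω => ENNReal.ofReal (g ω)) q.2) := by
          have := (hgm.comp (measurable_snd (α := ℝ))).ennreal_ofReal.indicator hs'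
          exact this
        exact hm.lintegral_prod_right'
    _ = (2 * B) ^ s * (2 * A) ^ s := by
        have hA1 : (2 * A) ^ s = (2 * A) ^ (s - 1) * (2 * A) := by
          conv_lhs => rw [show s = (s - 1) + 1 by ring]
          rw [ENNReal.rpow_add_of_nonneg _ _ (by linarith) (by norm_num), ENNReal.rpow_one]
        rw [hA1, mul_assoc]

/-! ### The kernel `‖x - ω‖ ^ (1 - d)` -/

lemma lintegral_ball_riesz (d : ℕ) (hd : 2 ≤ d) (r : ℝ) (hr : 0 ≤ r) (ω : Ed d) :
    ∫⁻ x in ball ω r, ENNReal.ofReal ((‖x - ω‖ ^ (d - 1))⁻¹) =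
      ENNReal.ofReal (d * (volume : Measure (Ed d)).real (ball 0 1) * r) := by
  have hne : Nontrivial (Ed d) := by
    have : Nonempty (Fin d) := ⟨⟨0, by omega⟩⟩
    infer_instance
  have hfr : Module.finrank ℝ (Ed d) = d := by simp
  set F : ℝ → ℝ := (Iio r).indicator (fun y => (y ^ (d - 1))⁻¹) with hF
  have hFeq : ∀ y ∈ Ioi (0 : ℝ), y ^ (d - 1) • F y = (Iio r).indicator (fun _ => (1 : ℝ)) y := by
    intro y hy
    have : y ^ (d - 1) ≠ 0 := pow_ne_zero _ (ne_of_gt hy)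
    by_cases h : y < r
    · simp [hF, h, this]
    · simp [hF, h]
  have hF_int : Integrable (fun x : Ed d => F ‖x‖) volume := by
    rw [integrable_fun_norm_addHaar, hfr, integrableOn_congr_fun hFeq measurableSet_Ioi,
      IntegrableOn, integrable_indicator_iff measurableSet_Iio, IntegrableOn,
      Measure.restrict_restrict measurableSet_Iio, inter_comm, Ioi_inter_Iio]
    exact integrable_const _
  have hval : ∫ x : Ed d, F ‖x‖ = d * (volume : Measure (Ed d)).real (ball 0 1) * r := by
    rw [integral_fun_norm_addHaar, hfr, setIntegral_congr_fun measurableSet_Ioi hFeq,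
      integral_indicator measurableSet_Iio, Measure.restrict_restrict measurableSet_Iio, inter_comm,
      Ioi_inter_Iio]
    simp [hr, mul_assoc]
  have hF0 : ∀ x : Ed d, 0 ≤ F ‖x‖ := fun x => indicator_apply_nonneg fun _ => by positivity
  rw [← hval, ofReal_integral_eq_lintegral_ofReal hF_int (.of_forall hF0),
    ← lintegral_indicator measurableSet_ball,
    ← lintegral_sub_right_eq_self (fun x => ENNReal.ofReal (F ‖x‖)) ω]
  refine lintegral_congr fun x => ?_
  by_cases h : ‖x - ω‖ < r
  · simp [hF, mem_ball, dist_eq_norm, h]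
  · simp [hF, mem_ball, dist_eq_norm, h]

/-- Among sets of given volume the kernel integrates to at most the order of the radius of a ball of
that volume: split `E` at distance `vol(E)^{1/d}` from `ω`. -/
lemma lintegral_riesz_le (d : ℕ) (hd : 2 ≤ d) (E : Set (Ed d)) (hE : MeasurableSet E)
    (hfin : volume E ≠ ⊤) (ω : Ed d) :
    ∫⁻ x in E, ENNReal.ofReal ((‖x - ω‖ ^ (d - 1))⁻¹) ≤
      ENNReal.ofReal (d * (volume : Measure (Ed d)).real (ball 0 1) + 1) *
        volume E ^ (1 / (d : ℝ)) := by
  rcases eq_or_ne (volume E) 0 with h0 | h0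
  · rw [setLIntegral_measure_zero _ _ h0]; simp
  set m := (volume E).toReal with hm
  have hmpos : 0 < m := ENNReal.toReal_pos h0 hfin
  set r := m ^ (1 / (d : ℝ)) with hr
  have hrpos : 0 < r := Real.rpow_pos_of_pos hmpos _
  have hd0 : (d : ℝ) ≠ 0 := by positivity
  have hrd : r ^ d = m := by
    rw [hr, ← Real.rpow_natCast, ← Real.rpow_mul hmpos.le, one_div, inv_mul_cancel₀ hd0,
      Real.rpow_one]
  have hEv : volume E = ENNReal.ofReal m := (ENNReal.ofReal_toReal hfin).symm
  have hEr : volume E ^ (1 / (d : ℝ)) = ENNReal.ofReal r := by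
    rw [hEv, ENNReal.ofReal_rpow_of_pos hmpos]
  rw [hEr, ← ENNReal.ofReal_mul (by positivity), add_mul, one_mul,
    ENNReal.ofReal_add (by positivity) hrpos.le, ← lintegral_ball_riesz d hd r hrpos.le ω,
    ← lintegral_inter_add_sdiff _ E (measurableSet_ball (x := ω) (ε := r))]
  gcongr
  · exact inter_subset_right
  · calc ∫⁻ x in E \ ball ω r, ENNReal.ofReal ((‖x - ω‖ ^ (d - 1))⁻¹)
        ≤ ∫⁻ x in E \ ball ω r, ENNReal.ofReal ((r ^ (d - 1))⁻¹) := by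
          refine setLIntegral_mono measurable_const fun x hx => ENNReal.ofReal_le_ofReal ?_
          have : r ≤ ‖x - ω‖ := by simpa [dist_eq_norm] using hx.2
          gcongr
      _ = ENNReal.ofReal ((r ^ (d - 1))⁻¹) * volume (E \ ball ω r) := by simp
      _ ≤ ENNReal.ofReal ((r ^ (d - 1))⁻¹) * volume E := by gcongr; exact sdiff_subset
      _ = ENNReal.ofReal r := by
          rw [hEv, ← ENNReal.ofReal_mul (by positivity), ← hrd]
          congr 1
          obtain ⟨k, rfl⟩ : ∃ k, d = k + 1 := ⟨d - 1, by omega⟩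
          simp only [add_tsub_cancel_right]
          field_simp
          ring

/-! ### Surface measure and Hausdorff measure -/

open scoped Pointwise in
/-- The cone over a subset of the ball of radius `r` around a unit vector `x` is covered by at most
`1 / r + 1` balls of radius `2 r` centered on the segment from `0` to `x`. -/
lemma volume_cone_le (d : ℕ) (hd : 2 ≤ d) (x : Ed d) (hx : ‖x‖ = 1) (r : ℝ) (hr : 0 < r)
    (hr1 : r ≤ 1) (A : Set (Ed d)) (hA : A ⊆ closedBall x r) :
    volume (Ioo (0 : ℝ) 1 • A) ≤
      ENNReal.ofReal (2 ^ (d + 1) * (volume : Measure (Ed d)).real (ball 0 1) * r ^ (d - 1)) := by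
  set N := ⌊1 / r⌋₊ with hN
  have hsub : Ioo (0 : ℝ) 1 • A ⊆
      ⋃ k ∈ Finset.range (N + 1), closedBall (((k : ℝ) * r) • x) (2 * r) := by
    rintro _ ⟨t, ht, y, hy, rfl⟩
    have hyx : ‖y - x‖ ≤ r := by simpa [dist_eq_norm] using hA hy
    simp only [mem_iUnion, Finset.mem_range, mem_closedBall, dist_eq_norm]
    refine ⟨⌊t / r⌋₊, ?_, ?_⟩
    · apply Nat.lt_succ_of_le
      apply Nat.floor_le_floor
      gcongr
      exact ht.2.le
    · have h1 : (⌊t / r⌋₊ : ℝ) ≤ t / r := Nat.floor_le (by have := ht.1; positivity)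
      have h2 : t / r < ⌊t / r⌋₊ + 1 := Nat.lt_floor_add_one _
      rw [le_div_iff₀ hr] at h1
      rw [div_lt_iff₀ hr] at h2
      calc ‖t • y - ((⌊t / r⌋₊ : ℝ) * r) • x‖
          = ‖t • (y - x) + (t - (⌊t / r⌋₊ : ℝ) * r) • x‖ := by
            congr 1; module
        _ ≤ ‖t • (y - x)‖ + ‖(t - (⌊t / r⌋₊ : ℝ) * r) • x‖ := norm_add_le _ _
        _ = t * ‖y - x‖ + (t - (⌊t / r⌋₊ : ℝ) * r) := by
            rw [norm_smul, norm_smul, hx, Real.norm_of_nonneg ht.1.le,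
              Real.norm_of_nonneg (by linarith), mul_one]
        _ ≤ 1 * r + r := by
            have := ht.2.le
            gcongr
            linarith
        _ = 2 * r := by ring
  have hfr : Module.finrank ℝ (Ed d) = d := by simp
  have hb : volume (ball (0 : Ed d) 1) = ENNReal.ofReal ((volume : Measure (Ed d)).real (ball 0 1)) :=
    (ENNReal.ofReal_toReal measure_ball_lt_top.ne).symm
  calc volume (Ioo (0 : ℝ) 1 • A)
      ≤ volume (⋃ k ∈ Finset.range (N + 1), closedBall (((k : ℝ) * r) • x) (2 * r)) :=
        measure_mono hsub
    _ ≤ ∑ k ∈ Finset.range (N + 1), volume (closedBall (((k : ℝ) * r) • x) (2 * r)) :=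
        measure_biUnion_finset_le _ _
    _ = ENNReal.ofReal ((N + 1 : ℝ) * ((2 * r) ^ d * (volume : Measure (Ed d)).real (ball 0 1))) := by
        have : ∀ k ∈ Finset.range (N + 1), volume (closedBall (((k : ℝ) * r) • x) (2 * r)) =
            ENNReal.ofReal ((2 * r) ^ d * (volume : Measure (Ed d)).real (ball 0 1)) := by
          intro k _
          rw [Measure.addHaar_closedBall _ _ (by positivity), hfr, hb,
            ← ENNReal.ofReal_mul (by positivity)]
        rw [Finset.sum_congr rfl this, Finset.sum_const, Finset.card_range, nsmul_eq_mul,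
          show ((N : ℝ) + 1) = ((N + 1 : ℕ) : ℝ) by push_cast; ring,
          ENNReal.ofReal_mul (Nat.cast_nonneg _), ENNReal.ofReal_natCast]
    _ ≤ _ := by
        apply ENNReal.ofReal_le_ofReal
        have h1 : (N : ℝ) ≤ 1 / r := Nat.floor_le (by positivity)
        have h2 : (N : ℝ) + 1 ≤ 2 / r := by
          have : 1 ≤ 1 / r := by rw [le_div_iff₀ hr]; linarith
          calc (N : ℝ) + 1 ≤ 1 / r + 1 / r := by linarith
            _ = 2 / r := by ring
        calc _ ≤ (2 / r) * ((2 * r) ^ d * (volume : Measure (Ed d)).real (ball 0 1)) := by gcongr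
          _ = _ := by
            obtain ⟨k, rfl⟩ : ∃ k, d = k + 1 := ⟨d - 1, by omega⟩
            simp only [add_tsub_cancel_right]
            field_simp
            ring

open scoped Pointwise in
/-- Surface measure, defined by volumes of cones, is dominated by Hausdorff measure, because the
cone over a set of diameter `r` has volume `O(r ^ (d - 1))`. -/
lemma toSphere_map_le (d : ℕ) (hd : 2 ≤ d) :
    ∃ c : ℝ, 0 < c ∧ (volume : Measure (Ed d)).toSphere.map ((↑) : sphere (0 : Ed d) 1 → Ed d) ≤
      ENNReal.ofReal c • (μH[(d : ℝ) - 1] : Measure (Ed d)) := by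
  have hfr : Module.finrank ℝ (Ed d) = d := by simp
  have hd' : (2 : ℝ) ≤ d := by exact_mod_cast hd
  set v := (volume : Measure (Ed d)).real (ball 0 1) with hv
  have hvpos : 0 < v := ENNReal.toReal_pos (measure_ball_pos _ _ one_pos).ne' measure_ball_lt_top.ne
  set c : ℝ := d * (2 ^ (d + 1) * v) with hc
  have hcpos : 0 < c := by positivity
  refine ⟨c, hcpos, ?_⟩
  set m := (volume : Measure (Ed d)).toSphere.map ((↑) : sphere (0 : Ed d) 1 → Ed d) with hm
  have hcne : ENNReal.ofReal c ≠ 0 := by simpa using hcpos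
  have key : ∀ s : Set (Ed d), ediam s ≤ 1 → m s ≤ ENNReal.ofReal c * ediam s ^ ((d : ℝ) - 1) := by
    intro s hs
    by_cases hne : (s ∩ sphere 0 1).Nonempty
    swap
    · have h1 : s ⊆ (sphere (0 : Ed d) 1)ᶜ := fun y hy hy' => hne ⟨y, hy, hy'⟩
      have h2 : m (sphere (0 : Ed d) 1)ᶜ = 0 := by
        rw [hm, Measure.map_apply measurable_subtype_coe isClosed_sphere.measurableSet.compl]
        convert measure_empty (μ := (volume : Measure (Ed d)).toSphere)
        ext y; simp
      exact (measure_mono h1).trans (h2.le.trans zero_le)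
    obtain ⟨x, hxs, hx⟩ := hne
    have hx1 : ‖x‖ = 1 := by simpa using hx
    have hsfin : ediam s ≠ ⊤ := (hs.trans_lt ENNReal.one_lt_top).ne
    set r := (ediam s).toReal with hr
    have hsr : ediam s = ENNReal.ofReal r := (ENNReal.ofReal_toReal hsfin).symm
    have hr0 : 0 ≤ r := ENNReal.toReal_nonneg
    have hr1 : r ≤ 1 := by simpa using ENNReal.toReal_mono ENNReal.one_ne_top hs
    have hsub : s ⊆ closedBall x r := by
      intro y hy
      rw [mem_closedBall, ← ENNReal.ofReal_le_ofReal_iff hr0, ← hsr, ← edist_dist]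
      exact edist_le_ediam_of_mem hy hxs
    have hms : m s ≤ d * volume (Ioo (0 : ℝ) 1 • (closedBall x r ∩ sphere (0 : Ed d) 1)) := by
      refine (measure_mono hsub).trans (le_of_eq ?_)
      rw [hm, Measure.map_apply measurable_subtype_coe measurableSet_closedBall,
        Measure.toSphere_apply' _ (measurable_subtype_coe measurableSet_closedBall), hfr,
        Subtype.image_preimage_coe, inter_comm]
    refine hms.trans ?_
    -- For `r = 0` the cone lies on a line, which is null since `d ≥ 2`.
    rcases hr0.eq_or_lt with h0 | h0
    · have hz : volume (Ioo (0 : ℝ) 1 • (closedBall x r ∩ sphere (0 : Ed d) 1)) = 0 := by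
        have hsp : Submodule.span ℝ {x} ≠ ⊤ := by
          intro htop
          have := finrank_span_singleton (K := ℝ) (v := x) (by rintro rfl; simp at hx1)
          rw [htop, finrank_top, hfr] at this
          omega
        refine measure_mono_null ?_ (Measure.addHaar_submodule volume _ hsp)
        rintro _ ⟨t, _, y, hy, rfl⟩
        have : y = x := by simpa [← h0] using hy.1
        rw [this]
        exact Submodule.smul_mem _ _ (Submodule.mem_span_singleton_self x)
      rw [hz]; simp
    · calc (d : ℝ≥0∞) * volume (Ioo (0 : ℝ) 1 • (closedBall x r ∩ sphere (0 : Ed d) 1))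
          ≤ d * ENNReal.ofReal (2 ^ (d + 1) * v * r ^ (d - 1)) := by
            gcongr
            exact volume_cone_le d hd x hx1 r h0 hr1 _ inter_subset_left
        _ = ENNReal.ofReal c * ediam s ^ ((d : ℝ) - 1) := by
            rw [hsr, ENNReal.ofReal_rpow_of_pos h0, ← ENNReal.ofReal_mul hcpos.le,
              ← ENNReal.ofReal_natCast, ← ENNReal.ofReal_mul (by positivity), hc,
              show (d : ℝ) - 1 = ((d - 1 : ℕ) : ℝ) by rw [Nat.cast_sub (by omega)]; simp,
              Real.rpow_natCast]
            congr 1; ring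
  have hle : (ENNReal.ofReal c)⁻¹ • m ≤ μH[(d : ℝ) - 1] := by
    refine Measure.le_hausdorffMeasure _ _ 1 one_pos fun s hs => ?_
    rw [Measure.smul_apply, smul_eq_mul]
    calc (ENNReal.ofReal c)⁻¹ * m s
        ≤ (ENNReal.ofReal c)⁻¹ * (ENNReal.ofReal c * ediam s ^ ((d : ℝ) - 1)) := by
          gcongr; exact key s hs
      _ = _ := by rw [← mul_assoc, ENNReal.inv_mul_cancel hcne (by simp), one_mul]
  refine Measure.le_iff.2 fun s _ => ?_
  calc m s = ENNReal.ofReal c * ((ENNReal.ofReal c)⁻¹ * m s) := by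
        rw [← mul_assoc, ENNReal.mul_inv_cancel hcne (by simp), one_mul]
    _ ≤ ENNReal.ofReal c * μH[(d : ℝ) - 1] s := by
        gcongr
        exact hle s

lemma toSphere_lintegral_le (d : ℕ) (hd : 2 ≤ d) :
    ∃ c : ℝ, 0 < c ∧ ∀ f : Ed d → ℝ≥0∞,
      ∫⁻ ω, f (ω : Ed d) ∂(volume : Measure (Ed d)).toSphere ≤
        ENNReal.ofReal c * ∫⁻ x in sphere (0 : Ed d) 1, f x ∂(μH[(d : ℝ) - 1]) := by
  obtain ⟨c, hc, h⟩ := toSphere_map_le d hd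
  refine ⟨c, hc, fun f => ?_⟩
  set m := (volume : Measure (Ed d)).toSphere.map ((↑) : sphere (0 : Ed d) 1 → Ed d) with hm
  have hS : MeasurableSet (sphere (0 : Ed d) 1) := isClosed_sphere.measurableSet
  have hr : m.restrict (sphere (0 : Ed d) 1) = m := by
    refine Measure.restrict_eq_self_of_ae_mem ?_
    exact (ae_map_iff measurable_subtype_coe.aemeasurable hS).2 (.of_forall fun ω => ω.2)
  calc ∫⁻ ω, f (ω : Ed d) ∂(volume : Measure (Ed d)).toSphere = ∫⁻ x, f x ∂m := by
        rw [hm, (MeasurableEmbedding.subtype_coe hS).lintegral_map]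
    _ = ∫⁻ x in sphere (0 : Ed d) 1, f x ∂m := by rw [hr]
    _ ≤ ∫⁻ x in sphere (0 : Ed d) 1, f x ∂(ENNReal.ofReal c • (μH[(d : ℝ) - 1] : Measure (Ed d))) :=
        lintegral_mono' (Measure.restrict_mono le_rfl h) le_rfl
    _ = _ := by rw [Measure.restrict_smul, lintegral_smul_measure, smul_eq_mul]

/-! ### The maximum principle -/

/-- `LineLap w x L`: along each coordinate line through `x` the function `w` is differentiable near
`x` and twice differentiable at `x`, and the pure second derivatives at `x` add up to `L`. -/
def LineLap {d : ℕ} (w : Ed d → ℝ) (x : Ed d) (L : ℝ) : Prop :=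
  ∃ (D : Fin d → ℝ → ℝ) (c : Fin d → ℝ),
    (∀ i, ∀ᶠ t in 𝓝 (0 : ℝ),
      HasDerivAt (fun t : ℝ => w (x + t • EuclideanSpace.single i (1 : ℝ))) (D i t) t) ∧
    (∀ i, HasDerivAt (D i) (c i) 0) ∧ ∑ i, c i = L

lemma LineLap.add {d : ℕ} {w v : Ed d → ℝ} {x : Ed d} {L M : ℝ} (hw : LineLap w x L)
    (hv : LineLap v x M) : LineLap (fun y => w y + v y) x (L + M) := by
  obtain ⟨D, c, h1, h2, h3⟩ := hw
  obtain ⟨D', c', h1', h2', h3'⟩ := hv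
  refine ⟨fun i t => D i t + D' i t, fun i => c i + c' i, fun i => ?_,
    fun i => (h2 i).add (h2' i), by rw [Finset.sum_add_distrib, h3, h3']⟩
  filter_upwards [h1 i, h1' i] with t ht ht'
  exact ht.add ht'

lemma LineLap.const_mul {d : ℕ} {w : Ed d → ℝ} {x : Ed d} {L : ℝ} (a : ℝ) (hw : LineLap w x L) :
    LineLap (fun y => a * w y) x (a * L) := by
  obtain ⟨D, c, h1, h2, h3⟩ := hw
  refine ⟨fun i t => a * D i t, fun i => a * c i, fun i => ?_,
    fun i => (h2 i).const_mul a, by rw [← Finset.mul_sum, h3]⟩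
  filter_upwards [h1 i] with t ht
  exact ht.const_mul a

lemma hasDerivAt_line {d : ℕ} (x : Ed d) (i : Fin d) (t : ℝ) :
    HasDerivAt (fun t : ℝ => x + t • EuclideanSpace.single i (1 : ℝ))
      (EuclideanSpace.single i (1 : ℝ)) t := by
  simpa using ((hasDerivAt_id t).smul_const (EuclideanSpace.single i (1 : ℝ) : Ed d)).const_add x

lemma hasDerivAt_line_coord {d : ℕ} (x : Ed d) (i : Fin d) (t : ℝ) :
    HasDerivAt (fun t : ℝ => (x + t • EuclideanSpace.single i (1 : ℝ) : Ed d) i) 1 t := by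
  have : (fun t : ℝ => (x + t • EuclideanSpace.single i (1 : ℝ) : Ed d) i) = fun t => x i + t := by
    funext t; simp
  rw [this]
  exact (hasDerivAt_id t).const_add _

lemma hasDerivAt_line_normSq {d : ℕ} (x ω : Ed d) (i : Fin d) (t : ℝ) :
    HasDerivAt (fun t : ℝ => ‖x + t • EuclideanSpace.single i (1 : ℝ) - ω‖ ^ 2)
      (2 * ((x + t • EuclideanSpace.single i (1 : ℝ) : Ed d) i - ω i)) t := by
  have h := ((hasDerivAt_line x i t).sub_const ω).norm_sq
  convert h using 1
  rw [EuclideanSpace.inner_single_right]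
  simp

lemma lineLap_normSq {d : ℕ} (x : Ed d) : LineLap (fun y : Ed d => ‖y‖ ^ 2) x (2 * d) := by
  refine ⟨fun i t => 2 * (x + t • EuclideanSpace.single i (1 : ℝ) : Ed d) i, fun _ => 2,
    fun i => .of_forall fun t => ?_, fun i => ?_, by simp [mul_comm]⟩
  · simpa using hasDerivAt_line_normSq x 0 i t
  · simpa using (hasDerivAt_line_coord x i 0).const_mul 2

/-- One pure second derivative is positive, so the restriction to that coordinate line has a
local minimum; a local maximum would make it locally constant. -/
lemma LineLap.not_isLocalMax {d : ℕ} {v : Ed d → ℝ} {x : Ed d} {L : ℝ} (hv : LineLap v x L)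
    (hL : 0 < L) : ¬ IsLocalMax v x := by
  intro hmax
  obtain ⟨D, c, h1, h2, h3⟩ := hv
  obtain ⟨i, -, hi⟩ : ∃ i ∈ Finset.univ, (0 : ℝ) < c i := by
    apply Finset.exists_lt_of_sum_lt
    simpa [h3] using hL
  set g : ℝ → ℝ := fun t => v (x + t • EuclideanSpace.single i (1 : ℝ)) with hg
  have hgmax : IsLocalMax g 0 := by
    have hc : Filter.Tendsto (fun t : ℝ => x + t • (EuclideanSpace.single i (1 : ℝ) : Ed d))
        (𝓝 0) (𝓝 x) := by
      have := (hasDerivAt_line x i 0).continuousAt.tendsto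
      simpa using this
    have := hc.eventually hmax
    refine this.mono fun t ht => ?_
    simpa [hg] using ht
  have hD : deriv g =ᶠ[𝓝 0] D i := (h1 i).mono fun t ht => ht.deriv
  have hdd : deriv (deriv g) 0 = c i := by rw [hD.deriv_eq]; exact (h2 i).deriv
  have hgmin : IsLocalMin g 0 := isLocalMin_of_deriv_deriv_pos (by rw [hdd]; exact hi)
    hgmax.deriv_eq_zero (h1 i).self_of_nhds.continuousAt
  have hconst : g =ᶠ[𝓝 0] fun _ => g 0 := by
    filter_upwards [hgmax, hgmin] with t a b using le_antisymm a b
  have h0 : deriv g =ᶠ[𝓝 0] fun _ => 0 := by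
    filter_upwards [hconst.eventuallyEq_nhds] with t ht
    rw [ht.deriv_eq]; simp
  rw [h0.deriv_eq] at hdd
  simp at hdd
  linarith

/-- Weak maximum principle. The perturbation `ε ‖y‖ ^ 2` makes the Laplacian strictly positive, so
that the maximum cannot be attained inside. -/
lemma max_principle {d : ℕ} (hd : 2 ≤ d) (w : Ed d → ℝ) (ρ : ℝ)
    (hc : ContinuousOn w (closedBall 0 ρ)) (hL : ∀ x ∈ ball (0 : Ed d) ρ, LineLap w x 0) (M : ℝ)
    (hM : ∀ x ∈ sphere (0 : Ed d) ρ, w x ≤ M) : ∀ x ∈ closedBall (0 : Ed d) ρ, w x ≤ M := by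
  intro x hx
  have key : ∀ ε : ℝ, 0 < ε → w x ≤ M + ε * ρ ^ 2 := by
    intro ε hε
    have hcv : ContinuousOn (fun y => w y + ε * ‖y‖ ^ 2) (closedBall (0 : Ed d) ρ) :=
      hc.add (by fun_prop)
    obtain ⟨x0, hx0, hmax⟩ := (isCompact_closedBall (0 : Ed d) ρ).exists_isMaxOn ⟨x, hx⟩ hcv
    have hxx : w x + ε * ‖x‖ ^ 2 ≤ w x0 + ε * ‖x0‖ ^ 2 := hmax hx
    have hx0' : ‖x0‖ ≤ ρ := by simpa using hx0
    rcases hx0'.lt_or_eq with h | h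
    · exfalso
      have hb : x0 ∈ ball (0 : Ed d) ρ := by simpa using h
      have hloc : IsLocalMax (fun y => w y + ε * ‖y‖ ^ 2) x0 :=
        hmax.isLocalMax (Filter.mem_of_superset (isOpen_ball.mem_nhds hb) ball_subset_closedBall)
      refine ((hL x0 hb).add ((lineLap_normSq x0).const_mul ε)).not_isLocalMax ?_ hloc
      have : (0 : ℝ) < d := by exact_mod_cast (by omega : 0 < d)
      positivity
    · have h1 := hM x0 (by simpa using h)
      rw [h] at hxx
      nlinarith [mul_nonneg hε.le (sq_nonneg ‖x‖)]
  refine le_of_forall_pos_le_add fun δ hδ => ?_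
  have := key (δ / (ρ ^ 2 + 1)) (by positivity)
  refine this.trans ?_
  gcongr
  rw [div_mul_eq_mul_div, div_le_iff₀ (by positivity)]
  nlinarith [sq_nonneg ρ]

lemma lineLap_of_lap {d : ℕ} {φ : Ed d → ℝ} {U : Set (Ed d)} (hU : IsOpen U)
    (hφ : ContDiffOn ℝ (⊤ : ℕ∞) φ U) {x : Ed d} (hx : x ∈ U) (hl : lap φ x = 0) :
    LineLap φ x 0 := by
  have hφ2 : ∀ y ∈ U, ContDiffAt ℝ 2 φ y := fun y hy =>
    (hφ.contDiffAt (hU.mem_nhds hy)).of_le (by norm_cast)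
  refine ⟨fun i t => fderiv ℝ φ (x + t • EuclideanSpace.single i (1 : ℝ))
    (EuclideanSpace.single i (1 : ℝ)),
    fun i => fderiv ℝ (fun y => fderiv ℝ φ y (EuclideanSpace.single i (1:ℝ))) x
      (EuclideanSpace.single i (1:ℝ)), fun i => ?_, fun i => ?_, hl⟩
  · have hmem : ∀ᶠ t in 𝓝 (0 : ℝ), x + t • (EuclideanSpace.single i (1 : ℝ) : Ed d) ∈ U := by
      apply (hasDerivAt_line x i 0).continuousAt.eventually_mem
      simpa using hU.mem_nhds hx
    filter_upwards [hmem] with t ht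
    exact ((hφ2 _ ht).differentiableAt (by norm_num)).hasFDerivAt.comp_hasDerivAt t
      (hasDerivAt_line x i t)
  · have hd1 : DifferentiableAt ℝ (fun y => fderiv ℝ φ y (EuclideanSpace.single i (1:ℝ)))
        (x + (0 : ℝ) • EuclideanSpace.single i (1 : ℝ)) := by
      have h1 : ContDiffAt ℝ 1 (fderiv ℝ φ) x := (hφ2 x hx).fderiv_right (by norm_num)
      simpa using (h1.differentiableAt (by norm_num)).clm_apply (differentiableAt_const _)
    simpa [Function.comp_def] using hd1.hasFDerivAt.comp_hasDerivAt 0 (hasDerivAt_line x i 0)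

/-! ### The Poisson kernel -/

/-- The Poisson kernel of the unit ball, without the normalizing factor `1 / |∂B₁|`. The power of
`‖x - ω‖` is written as a real power of the smooth function `‖x - ω‖ ^ 2`. -/
def pk (d : ℕ) (x ω : Ed d) : ℝ := (1 - ‖x‖ ^ 2) * (‖x - ω‖ ^ 2) ^ (-(d : ℝ) / 2)

/-- The partial derivative of `pk` in the `i`-th coordinate of its first variable. -/
def pk1 (d : ℕ) (i : Fin d) (x ω : Ed d) : ℝ :=
  (-(2 * x i)) * (‖x - ω‖ ^ 2) ^ (-(d : ℝ) / 2) +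
    (1 - ‖x‖ ^ 2) * (2 * (x i - ω i) * (-(d : ℝ) / 2) * (‖x - ω‖ ^ 2) ^ (-(d : ℝ) / 2 - 1))

/-- The second partial derivative of `pk` in the `i`-th coordinate of its first variable. -/
def pk2 (d : ℕ) (i : Fin d) (x ω : Ed d) : ℝ :=
  (-2) * (‖x - ω‖ ^ 2) ^ (-(d : ℝ) / 2) +
    (-(2 * x i)) * (2 * (x i - ω i) * (-(d : ℝ) / 2) * (‖x - ω‖ ^ 2) ^ (-(d : ℝ) / 2 - 1)) +
    ((-(2 * x i)) * (2 * (x i - ω i) * (-(d : ℝ) / 2) * (‖x - ω‖ ^ 2) ^ (-(d : ℝ) / 2 - 1)) +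
    (1 - ‖x‖ ^ 2) * (2 * (-(d : ℝ) / 2) * (‖x - ω‖ ^ 2) ^ (-(d : ℝ) / 2 - 1) +
      2 * (x i - ω i) * (-(d : ℝ) / 2) *
        (2 * (x i - ω i) * (-(d : ℝ) / 2 - 1) * (‖x - ω‖ ^ 2) ^ (-(d : ℝ) / 2 - 1 - 1))))

lemma normSq_sub_ne {d : ℕ} {x ω : Ed d} (h : x ≠ ω) : ‖x - ω‖ ^ 2 ≠ 0 := by
  simpa [sub_eq_zero] using h

lemma hasDerivAt_one_sub_normSq {d : ℕ} (x : Ed d) (i : Fin d) (t : ℝ) :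
    HasDerivAt (fun t : ℝ => 1 - ‖x + t • EuclideanSpace.single i (1 : ℝ)‖ ^ 2)
      (-(2 * (x + t • EuclideanSpace.single i (1 : ℝ) : Ed d) i)) t := by
  have h := (hasDerivAt_line_normSq x 0 i t).const_sub 1
  simpa using h

lemma hasDerivAt_pk {d : ℕ} (i : Fin d) (x ω : Ed d) (t : ℝ)
    (h : x + t • EuclideanSpace.single i (1 : ℝ) ≠ ω) :
    HasDerivAt (fun t : ℝ => pk d (x + t • EuclideanSpace.single i (1 : ℝ)) ω)
      (pk1 d i (x + t • EuclideanSpace.single i (1 : ℝ)) ω) t :=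
  (hasDerivAt_one_sub_normSq x i t).mul
    ((hasDerivAt_line_normSq x ω i t).rpow_const (Or.inl (normSq_sub_ne h)))

lemma hasDerivAt_pk1 {d : ℕ} (i : Fin d) (x ω : Ed d) (t : ℝ)
    (h : x + t • EuclideanSpace.single i (1 : ℝ) ≠ ω) :
    HasDerivAt (fun t : ℝ => pk1 d i (x + t • EuclideanSpace.single i (1 : ℝ)) ω)
      (pk2 d i (x + t • EuclideanSpace.single i (1 : ℝ)) ω) t := by
  have hb := hasDerivAt_line_normSq x ω i t
  have hn := normSq_sub_ne h
  have hx := hasDerivAt_line_coord x i t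
  have e1 := ((hx.const_mul 2).neg).mul (hb.rpow_const (p := -(d : ℝ) / 2) (Or.inl hn))
  have e2 := (hasDerivAt_one_sub_normSq x i t).mul
    ((((hx.sub_const (ω i)).const_mul 2).mul_const (-(d : ℝ) / 2)).mul
      (hb.rpow_const (p := -(d : ℝ) / 2 - 1) (Or.inl hn)))
  have e := e1.add e2
  refine (e.congr_deriv ?_)
  simp only [pk2, Pi.neg_apply, Pi.mul_apply]
  ring

/-- The Poisson kernel is harmonic in `x` away from `ω`; this uses `‖ω‖ = 1`. -/
lemma sum_pk2 {d : ℕ} {x ω : Ed d} (h : x ≠ ω) (hω : ‖ω‖ = 1) : ∑ i, pk2 d i x ω = 0 := by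
  set s : ℝ := -(d : ℝ) / 2 with hs
  set b : ℝ := ‖x - ω‖ ^ 2 with hb
  have hbpos : 0 < b := lt_of_le_of_ne (sq_nonneg _) (normSq_sub_ne h).symm
  have h1 : b ^ s = b ^ (s - 1 - 1) * b ^ 2 := by
    rw [← Real.rpow_natCast, ← Real.rpow_add hbpos]; congr 1; push_cast; ring
  have h2 : b ^ (s - 1) = b ^ (s - 1 - 1) * b := by
    conv_rhs => rw [← Real.rpow_one b]
    rw [Real.rpow_one b, ← Real.rpow_add_one hbpos.ne']; congr 1; ring
  have hx2 : ∑ i, x i * (x i - ω i) = inner ℝ x (x - ω) := by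
    rw [real_inner_comm]; simp [PiLp.inner_apply]
  have hq : ∑ i, (x i - ω i) ^ 2 = b := by
    rw [hb, EuclideanSpace.norm_sq_eq]; simp
  have hb2 : b = ‖x‖ ^ 2 - 2 * inner ℝ x ω + 1 := by
    rw [hb, norm_sub_sq_real, hω]; norm_num
  have hx3 : inner ℝ x (x - ω) = ‖x‖ ^ 2 - inner ℝ x ω := by
    rw [inner_sub_right, real_inner_self_eq_norm_sq]
  have expand : ∀ i, pk2 d i x ω = b ^ (s - 1 - 1) * ((-2 * b ^ 2 + (1 - ‖x‖ ^ 2) * (2 * s * b)) -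
      8 * s * b * (x i * (x i - ω i)) + 4 * s * (s - 1) * (1 - ‖x‖ ^ 2) * (x i - ω i) ^ 2) := by
    intro i
    simp only [pk2, ← hs, ← hb, h1, h2]
    ring
  rw [Finset.sum_congr rfl fun i _ => expand i, ← Finset.mul_sum, Finset.sum_add_distrib,
    Finset.sum_sub_distrib, ← Finset.mul_sum, ← Finset.mul_sum, hx2, hq, hx3, Finset.sum_const,
    Finset.card_univ, Fintype.card_fin, nsmul_eq_mul]
  have hds : (d : ℝ) = -2 * s := by rw [hs]; ring
  rw [hds]
  have : -2 * s * (-2 * b ^ 2 + (1 - ‖x‖ ^ 2) * (2 * s * b)) - 8 * s * b * (‖x‖ ^ 2 - inner ℝ x ω)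
      + 4 * s * (s - 1) * (1 - ‖x‖ ^ 2) * b
      = 4 * s * b * (b - (‖x‖ ^ 2 - 2 * inner ℝ x ω + 1)) := by ring
  rw [this, ← hb2]; ring

lemma continuousOn_normSq_rpow {d : ℕ} (s : ℝ) :
    ContinuousOn (fun p : Ed d × Ed d => (‖p.1 - p.2‖ ^ 2) ^ s) {p | p.1 ≠ p.2} := by
  refine ContinuousOn.rpow_const (by fun_prop) fun p hp => Or.inl (normSq_sub_ne hp)

lemma continuousOn_pk (d : ℕ) :
    ContinuousOn (fun p : Ed d × Ed d => pk d p.1 p.2) {p | p.1 ≠ p.2} := by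
  have := continuousOn_normSq_rpow (d := d)
  unfold pk
  fun_prop

lemma continuousOn_pk1 (d : ℕ) (i : Fin d) :
    ContinuousOn (fun p : Ed d × Ed d => pk1 d i p.1 p.2) {p | p.1 ≠ p.2} := by
  have := continuousOn_normSq_rpow (d := d)
  unfold pk1
  fun_prop

lemma continuousOn_pk2 (d : ℕ) (i : Fin d) :
    ContinuousOn (fun p : Ed d × Ed d => pk2 d i p.1 p.2) {p | p.1 ≠ p.2} := by
  have := continuousOn_normSq_rpow (d := d)
  unfold pk2
  fun_prop

lemma ne_of_ball_sphere {d : ℕ} {x ω : Ed d} (hx : ‖x‖ < 1) (hω : ‖ω‖ = 1) : x ≠ ω := by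
  rintro rfl; linarith

lemma continuous_kernel_mul {d : ℕ} {F : Ed d → Ed d → ℝ}
    (hF : ContinuousOn (fun p : Ed d × Ed d => F p.1 p.2) {p | p.1 ≠ p.2})
    {g : sphere (0 : Ed d) 1 → ℝ} (hg : Continuous g) {x : Ed d} (hx : ‖x‖ < 1) :
    Continuous (fun ω : sphere (0 : Ed d) 1 => F x ω * g ω) := by
  refine Continuous.mul ?_ hg
  exact hF.comp_continuous (f := fun ω : sphere (0 : Ed d) 1 => (x, (ω : Ed d))) (by fun_prop)
    fun ω => ne_of_ball_sphere hx (by simp)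

lemma integrable_sphere {d : ℕ} {f : sphere (0 : Ed d) 1 → ℝ} (hf : Continuous f) :
    Integrable f (volume : Measure (Ed d)).toSphere :=
  hf.integrable_of_hasCompactSupport (HasCompactSupport.of_compactSpace f)

/-- Differentiation under the integral sign along a coordinate line, for a kernel that is singular
only on the diagonal. -/
lemma hasDerivAt_kernel_integral {d : ℕ} {F F' : Ed d → Ed d → ℝ} (i : Fin d)
    (hF : ContinuousOn (fun p : Ed d × Ed d => F p.1 p.2) {p | p.1 ≠ p.2})
    (hF' : ContinuousOn (fun p : Ed d × Ed d => F' p.1 p.2) {p | p.1 ≠ p.2})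
    (hder : ∀ x ω : Ed d, ∀ t : ℝ, x + t • EuclideanSpace.single i (1 : ℝ) ≠ ω →
      HasDerivAt (fun t : ℝ => F (x + t • EuclideanSpace.single i (1 : ℝ)) ω)
        (F' (x + t • EuclideanSpace.single i (1 : ℝ)) ω) t)
    {g : sphere (0 : Ed d) 1 → ℝ} (hg : Continuous g) (x : Ed d) (t₀ : ℝ)
    (hx : ‖x + t₀ • (EuclideanSpace.single i (1 : ℝ) : Ed d)‖ < 1) :
    HasDerivAt (fun t : ℝ => ∫ ω : sphere (0 : Ed d) 1,
        F (x + t • EuclideanSpace.single i (1 : ℝ)) ω * g ω ∂(volume : Measure (Ed d)).toSphere)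
      (∫ ω : sphere (0 : Ed d) 1, F' (x + t₀ • EuclideanSpace.single i (1 : ℝ)) ω * g ω
        ∂(volume : Measure (Ed d)).toSphere) t₀ := by
  obtain ⟨ρ, hρ1, hρ2⟩ := exists_between hx
  have hK : IsCompact (closedBall (0 : Ed d) ρ ×ˢ sphere (0 : Ed d) 1) :=
    (isCompact_closedBall _ _).prod (isCompact_sphere _ _)
  obtain ⟨M, hM⟩ := hK.exists_bound_of_continuousOn (hF'.mono (by
    rintro ⟨y, ω⟩ ⟨hy, hω⟩
    exact ne_of_ball_sphere ((mem_closedBall_zero_iff.1 hy).trans_lt hρ2)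
      (mem_sphere_zero_iff_norm.1 hω)))
  set s : Set ℝ := {t | ‖x + t • (EuclideanSpace.single i (1 : ℝ) : Ed d)‖ < ρ} with hs
  have hso : IsOpen s := isOpen_lt (by fun_prop) continuous_const
  have hsn : s ∈ 𝓝 t₀ := hso.mem_nhds (show t₀ ∈ s from hρ1)
  refine (hasDerivAt_integral_of_dominated_loc_of_deriv_le
    (F := fun t (ω : sphere (0 : Ed d) 1) =>
      F (x + t • EuclideanSpace.single i (1 : ℝ)) ω * g ω)
    (F' := fun t (ω : sphere (0 : Ed d) 1) =>
      F' (x + t • EuclideanSpace.single i (1 : ℝ)) ω * g ω)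
    (μ := (volume : Measure (Ed d)).toSphere) (bound := fun ω => M * |g ω|) hsn ?_ ?_ ?_ ?_ ?_
    ?_).2
  · filter_upwards [hsn] with t ht
    exact (continuous_kernel_mul hF hg (lt_trans ht hρ2)).aestronglyMeasurable
  · exact integrable_sphere (continuous_kernel_mul hF hg hx)
  · exact (continuous_kernel_mul hF' hg hx).aestronglyMeasurable
  · refine .of_forall fun ω t ht => ?_
    rw [norm_mul, Real.norm_eq_abs (g ω)]
    gcongr
    exact hM (_, (ω : Ed d)) ⟨mem_closedBall_zero_iff.2 (le_of_lt ht), ω.2⟩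
  · exact integrable_sphere (by fun_prop)
  · refine .of_forall fun ω t ht => ?_
    exact (hder x ω t (ne_of_ball_sphere (lt_trans ht hρ2) (by simp))).mul_const _

/-- The (unnormalized) Poisson integral of boundary data `g`. -/
def poissonInt {d : ℕ} (g : sphere (0 : Ed d) 1 → ℝ) (x : Ed d) : ℝ :=
  ∫ ω : sphere (0 : Ed d) 1, pk d x ω * g ω ∂(volume : Measure (Ed d)).toSphere

lemma lineLap_poissonInt {d : ℕ} {g : sphere (0 : Ed d) 1 → ℝ} (hg : Continuous g) {x : Ed d}
    (hx : ‖x‖ < 1) : LineLap (poissonInt g) x 0 := by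
  refine ⟨fun i t => ∫ ω : sphere (0 : Ed d) 1,
      pk1 d i (x + t • EuclideanSpace.single i (1 : ℝ)) ω * g ω
        ∂(volume : Measure (Ed d)).toSphere,
    fun i => ∫ ω : sphere (0 : Ed d) 1, pk2 d i x ω * g ω
        ∂(volume : Measure (Ed d)).toSphere, fun i => ?_, fun i => ?_, ?_⟩
  · have : {t : ℝ | ‖x + t • (EuclideanSpace.single i (1 : ℝ) : Ed d)‖ < 1} ∈ 𝓝 (0 : ℝ) := by
      have ho : IsOpen {t : ℝ | ‖x + t • (EuclideanSpace.single i (1 : ℝ) : Ed d)‖ < 1} :=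
        isOpen_lt (by fun_prop) continuous_const
      exact ho.mem_nhds (by simpa using hx)
    filter_upwards [this] with t ht
    exact hasDerivAt_kernel_integral i (continuousOn_pk d) (continuousOn_pk1 d i)
      (hasDerivAt_pk i) hg x t ht
  · have := hasDerivAt_kernel_integral i (continuousOn_pk1 d i) (continuousOn_pk2 d i)
      (hasDerivAt_pk1 i) hg x 0 (by simpa using hx)
    simpa using this
  · rw [← integral_finsetSum _ fun i _ =>
      integrable_sphere (continuous_kernel_mul (continuousOn_pk2 d i) hg hx)]
    simp_rw [← Finset.sum_mul]
    have : ∀ ω : sphere (0 : Ed d) 1, ∑ i, pk2 d i x ω = 0 := fun ω =>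
      sum_pk2 (ne_of_ball_sphere hx (by simp)) (by simp)
    simp [this]

lemma continuousOn_poissonInt {d : ℕ} {g : sphere (0 : Ed d) 1 → ℝ} (hg : Continuous g) :
    ContinuousOn (poissonInt g) (ball (0 : Ed d) 1) := by
  rw [continuousOn_iff_continuous_domRestrict]
  have : LocallyCompactSpace (ball (0 : Ed d) 1) := isOpen_ball.locallyCompactSpace
  have h := continuous_parametric_integral_of_continuous
    (μ := (volume : Measure (Ed d)).toSphere)
    (f := fun (x : ball (0 : Ed d) 1) (ω : sphere (0 : Ed d) 1) => pk d x ω * g ω) ?_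
    (isCompact_univ (X := sphere (0 : Ed d) 1))
  · simpa [Set.domRestrict_def, poissonInt] using h
  · refine Continuous.mul ?_ (by fun_prop)
    exact (continuousOn_pk d).comp_continuous (f := fun q : ball (0 : Ed d) 1 × sphere (0 : Ed d) 1 =>
      ((q.1 : Ed d), (q.2 : Ed d))) (by fun_prop)
      fun q => ne_of_ball_sphere (mem_ball_zero_iff.1 q.1.2) (by simp)

/-! ### Normalization of the Poisson kernel and the representation formula -/

/-- The self-map of the unit sphere induced by a linear isometry. -/
def sphereMap {d : ℕ} (R : Ed d ≃ₗᵢ[ℝ] Ed d) (ω : sphere (0 : Ed d) 1) : sphere (0 : Ed d) 1 :=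
  ⟨R ω, by simp⟩

lemma continuous_sphereMap {d : ℕ} (R : Ed d ≃ₗᵢ[ℝ] Ed d) : Continuous (sphereMap R) :=
  Continuous.subtype_mk (R.continuous.comp continuous_subtype_val) _

open scoped Pointwise in
lemma measurePreserving_sphereMap {d : ℕ} (R : Ed d ≃ₗᵢ[ℝ] Ed d) :
    MeasurePreserving (sphereMap R) (volume : Measure (Ed d)).toSphere
      (volume : Measure (Ed d)).toSphere := by
  refine ⟨(continuous_sphereMap R).measurable, ?_⟩
  ext s hs
  have hm := (continuous_sphereMap R).measurable hs
  rw [Measure.map_apply (continuous_sphereMap R).measurable hs, Measure.toSphere_apply' _ hm,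
    Measure.toSphere_apply' _ hs]
  congr 1
  have himg : (Ioo (0 : ℝ) 1 • ((↑) '' (sphereMap R ⁻¹' s) : Set (Ed d)))
      = R ⁻¹' (Ioo (0 : ℝ) 1 • ((↑) '' s : Set (Ed d))) := by
    ext y
    simp only [Set.mem_smul, Set.mem_image, Set.mem_preimage]
    constructor
    · rintro ⟨r, hr, _, ⟨ω, hω, rfl⟩, rfl⟩
      exact ⟨r, hr, _, ⟨_, hω, rfl⟩, by simp [sphereMap]⟩
    · rintro ⟨r, hr, _, ⟨ω, hω, rfl⟩, h⟩
      refine ⟨r, hr, R.symm ω, ⟨sphereMap R.symm ω, ?_, rfl⟩, ?_⟩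
      · convert hω
        ext1
        simp [sphereMap]
      · rw [← map_smul, h, R.symm_apply_apply]
  rw [himg]
  exact R.measurePreserving.measure_preimage_equiv (f := R.toHomeomorph.toMeasurableEquiv) _

lemma pk_isometry {d : ℕ} (R : Ed d ≃ₗᵢ[ℝ] Ed d) (x ω : Ed d) : pk d (R x) (R ω) = pk d x ω := by
  simp only [pk, ← map_sub, R.norm_map]

/-- Two points of equal norm are exchanged by a reflection, which preserves the kernel and the
surface measure. -/
lemma poissonInt_one_eq_of_norm_eq {d : ℕ} {x y : Ed d} (hx : ‖x‖ < 1) (hxy : ‖x‖ = ‖y‖) :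
    poissonInt (fun _ => 1) x = poissonInt (fun _ => 1) y := by
  set R : Ed d ≃ₗᵢ[ℝ] Ed d := (ℝ ∙ (x - y))ᗮ.reflection
  have hR : R x = y := Submodule.reflection_sub hxy
  have h := (measurePreserving_sphereMap R).map_eq
  simp only [poissonInt, mul_one]
  conv_rhs => rw [← h]
  rw [integral_map (continuous_sphereMap R).aemeasurable]
  · refine integral_congr_ae (.of_forall fun ω => ?_)
    simp only [sphereMap]
    rw [← hR, pk_isometry]
  · rw [h]
    have := continuous_kernel_mul (continuousOn_pk d) (g := fun _ => 1) continuous_const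
      (hxy ▸ hx : ‖y‖ < 1)
    simpa using this.aestronglyMeasurable

/-- The total mass of the surface measure on the unit sphere. -/
def sphereMass (d : ℕ) : ℝ := (volume : Measure (Ed d)).toSphere.real univ

/-- The Poisson integral of `1` is radial and harmonic, hence constant by the maximum principle; its
value is read off at the origin. -/
lemma poissonInt_one {d : ℕ} (hd : 2 ≤ d) {x : Ed d} (hx : ‖x‖ < 1) :
    poissonInt (fun _ => 1) x = sphereMass d := by
  have h0 : poissonInt (d := d) (fun _ => 1) 0 = sphereMass d := by
    simp [poissonInt, pk, sphereMass]
  rw [← h0]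
  have hc : ContinuousOn (poissonInt (d := d) fun _ => 1) (closedBall 0 ‖x‖) :=
    (continuousOn_poissonInt continuous_const).mono (closedBall_subset_ball hx)
  have hL : ∀ y ∈ ball (0 : Ed d) ‖x‖, LineLap (poissonInt (d := d) fun _ => 1) y 0 := fun y hy =>
    lineLap_poissonInt continuous_const ((mem_ball_zero_iff.1 hy).trans hx)
  have hs : ∀ y ∈ sphere (0 : Ed d) ‖x‖,
      poissonInt (fun _ => 1) y = poissonInt (fun _ => 1) x := fun y hy =>
    (poissonInt_one_eq_of_norm_eq hx (mem_sphere_zero_iff_norm.1 hy).symm).symm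
  have h1 := max_principle hd _ ‖x‖ hc hL _ (fun y hy => (hs y hy).le) 0 (by simp)
  have h2 := max_principle hd (fun y => (-1) * poissonInt (fun _ => 1) y) ‖x‖
    (continuousOn_const.mul hc) (fun y hy => by simpa using (hL y hy).const_mul (-1))
    _ (fun y hy => (congrArg ((-1) * ·) (hs y hy)).le) 0 (by simp)
  linarith

lemma pk_nonneg {d : ℕ} {x : Ed d} (hx : ‖x‖ < 1) (ω : Ed d) : 0 ≤ pk d x ω := by
  have : ‖x‖ ^ 2 ≤ 1 := by nlinarith [norm_nonneg x]
  exact mul_nonneg (by linarith) (Real.rpow_nonneg (sq_nonneg _) _)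

lemma pk_le_of_far {d : ℕ} {x ω : Ed d} (hx : ‖x‖ < 1) {δ : ℝ} (hδ : 0 < δ) (h : δ ≤ ‖x - ω‖) :
    pk d x ω ≤ (1 - ‖x‖ ^ 2) * (δ ^ 2) ^ (-(d : ℝ) / 2) := by
  have : ‖x‖ ^ 2 ≤ 1 := by nlinarith [norm_nonneg x]
  refine mul_le_mul_of_nonneg_left ?_ (by linarith)
  refine Real.rpow_le_rpow_of_nonpos (by positivity) (by gcongr) ?_
  have : (0 : ℝ) ≤ d := Nat.cast_nonneg d
  linarith

lemma pk_le {d : ℕ} (hd : 2 ≤ d) {x ω : Ed d} (hx : ‖x‖ < 1) (hω : ‖ω‖ = 1) :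
    pk d x ω ≤ 2 * (‖x - ω‖ ^ (d - 1))⁻¹ := by
  have hne : 0 < ‖x - ω‖ := norm_pos_iff.2 (sub_ne_zero.2 (ne_of_ball_sphere hx hω))
  have h1 : 1 - ‖x‖ ≤ ‖x - ω‖ := by
    have := norm_sub_norm_le ω x
    rw [hω, norm_sub_rev] at this; exact this
  have h2 : 1 - ‖x‖ ^ 2 ≤ 2 * ‖x - ω‖ := by nlinarith [norm_nonneg x]
  have h3 : (‖x - ω‖ ^ 2) ^ (-(d : ℝ) / 2) = (‖x - ω‖ ^ (d - 1))⁻¹ * ‖x - ω‖⁻¹ := by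
    rw [← Real.rpow_natCast, ← Real.rpow_mul hne.le, ← mul_inv, ← pow_succ,
      Nat.sub_add_cancel (by omega), ← Real.rpow_natCast ‖x - ω‖ d, ← Real.rpow_neg hne.le]
    congr 1; push_cast; ring
  rw [pk, h3]
  calc (1 - ‖x‖ ^ 2) * ((‖x - ω‖ ^ (d - 1))⁻¹ * ‖x - ω‖⁻¹)
      ≤ (2 * ‖x - ω‖) * ((‖x - ω‖ ^ (d - 1))⁻¹ * ‖x - ω‖⁻¹) := by gcongr
    _ = 2 * (‖x - ω‖ ^ (d - 1))⁻¹ := by field_simp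

/-- Approximate identity: near the boundary the Poisson integral of the boundary values of `φ` is
uniformly close to `sphereMass d * φ`. -/
lemma poissonInt_sub_le {d : ℕ} (hd : 2 ≤ d) {φ : Ed d → ℝ}
    (hφ : ContinuousOn φ (closedBall 0 1)) {ε : ℝ} (hε : 0 < ε) :
    ∃ r < 1, ∀ x : Ed d, r < ‖x‖ → ‖x‖ < 1 →
      |poissonInt (fun ω => φ ω) x - sphereMass d * φ x| ≤ ε := by
  have hcomp := isCompact_closedBall (0 : Ed d) 1
  obtain ⟨M, hM⟩ := hcomp.exists_bound_of_continuousOn hφ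
  have hM0 : 0 ≤ M := (norm_nonneg _).trans (hM 0 (by simp))
  have hS0 : 0 ≤ sphereMass d := measureReal_nonneg
  set η : ℝ := ε / (2 * (sphereMass d + 1)) with hη
  have hη0 : 0 < η := by positivity
  obtain ⟨δ, hδ, huc⟩ := Metric.uniformContinuousOn_iff.1
    (hcomp.uniformContinuousOn_of_continuous hφ) η hη0
  set A : ℝ := (δ ^ 2) ^ (-(d : ℝ) / 2) with hA
  have hA0 : 0 ≤ A := by positivity
  set B : ℝ := 4 * M * A * sphereMass d with hB
  have hB0 : 0 ≤ B := by positivity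
  refine ⟨1 - ε / (2 * (B + 1)), by linarith [show 0 < ε / (2 * (B + 1)) by positivity],
    fun x hx1 hx => ?_⟩
  have hg : Continuous fun ω : sphere (0 : Ed d) 1 => φ ω :=
    hφ.comp_continuous continuous_subtype_val fun ω => sphere_subset_closedBall ω.2
  have hk := continuous_kernel_mul (continuousOn_pk d) hg hx
  have hk1 := continuous_kernel_mul (continuousOn_pk d) (g := fun _ => (1 : ℝ)) continuous_const hx
  have hone := poissonInt_one hd hx
  have e1 : poissonInt (fun ω => φ ω) x - sphereMass d * φ x
      = ∫ ω : sphere (0 : Ed d) 1, (pk d x ω * φ ω - pk d x ω * 1 * φ x)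
        ∂(volume : Measure (Ed d)).toSphere := by
    rw [integral_sub (integrable_sphere hk) ((integrable_sphere hk1).mul_const (φ x)),
      integral_mul_const, ← hone]
    rfl
  have hx2 : 1 - ‖x‖ ^ 2 ≤ 2 * (1 - ‖x‖) := by nlinarith
  have hx3 : 0 ≤ 1 - ‖x‖ ^ 2 := by nlinarith [norm_nonneg x]
  have hpt : ∀ ω : sphere (0 : Ed d) 1, |pk d x ω * φ ω - pk d x ω * 1 * φ x|
      ≤ η * (pk d x ω * 1) + 4 * M * A * (1 - ‖x‖) := by
    intro ω
    have hp := pk_nonneg hx (ω : Ed d)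
    have : pk d x ω * φ ω - pk d x ω * 1 * φ x = pk d x ω * (φ ω - φ x) := by ring
    rw [this, abs_mul, abs_of_nonneg hp]
    have hωm : (ω : Ed d) ∈ closedBall (0 : Ed d) 1 := sphere_subset_closedBall ω.2
    have hxm : x ∈ closedBall (0 : Ed d) 1 := by simpa using hx.le
    have hlast : 0 ≤ 4 * M * A * (1 - ‖x‖) := mul_nonneg (by positivity) (by linarith)
    rcases lt_or_ge (‖x - ω‖) δ with h | h
    · have h5 := huc ω hωm x hxm (by rwa [dist_comm, dist_eq_norm])
      rw [Real.dist_eq] at h5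
      nlinarith [mul_le_mul_of_nonneg_left h5.le hp]
    · have h6 := pk_le_of_far hx hδ h
      have h7 : |φ ω - φ x| ≤ 2 * M := by
        have a1 := abs_le.1 (hM _ hωm)
        have a2 := abs_le.1 (hM _ hxm)
        rw [abs_le]; constructor <;> linarith
      calc pk d x ω * |φ ω - φ x| ≤ ((1 - ‖x‖ ^ 2) * A) * (2 * M) := by gcongr
        _ ≤ ((2 * (1 - ‖x‖)) * A) * (2 * M) := by gcongr
        _ = 4 * M * A * (1 - ‖x‖) := by ring
        _ ≤ _ := by
          have := mul_nonneg hη0.le (mul_nonneg hp zero_le_one)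
          linarith
  rw [e1]
  have hI : Integrable (fun ω : sphere (0 : Ed d) 1 => η * (pk d x ω * 1))
      (volume : Measure (Ed d)).toSphere := (integrable_sphere hk1).const_mul η
  calc |∫ ω : sphere (0 : Ed d) 1, (pk d x ω * φ ω - pk d x ω * 1 * φ x)
        ∂(volume : Measure (Ed d)).toSphere|
      ≤ ∫ ω : sphere (0 : Ed d) 1, |pk d x ω * φ ω - pk d x ω * 1 * φ x|
        ∂(volume : Measure (Ed d)).toSphere := abs_integral_le_integral_abs
    _ ≤ ∫ ω : sphere (0 : Ed d) 1, (η * (pk d x ω * 1) + 4 * M * A * (1 - ‖x‖))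
        ∂(volume : Measure (Ed d)).toSphere :=
        integral_mono (integrable_sphere (hk.sub (hk1.mul continuous_const)).abs)
          (hI.add (integrable_const _)) hpt
    _ = η * sphereMass d + B * (1 - ‖x‖) := by
        rw [integral_add hI (integrable_const _), integral_const_mul, integral_const, ← hone]
        rw [hB, smul_eq_mul, hone]
        simp only [poissonInt, sphereMass] at hone ⊢
        rw [hone]; ring
    _ ≤ ε / 2 + ε / 2 := by
        have t1 : η * sphereMass d ≤ ε / 2 := by
          rw [hη, div_mul_eq_mul_div, div_le_div_iff₀ (by positivity) (by positivity)]
          nlinarith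
        have t2 : B * (1 - ‖x‖) ≤ B * (ε / (2 * (B + 1))) := by gcongr; linarith
        have t3 : B * (ε / (2 * (B + 1))) ≤ ε / 2 := by
          rw [mul_div_assoc', div_le_div_iff₀ (by positivity) (by positivity)]
          nlinarith
        linarith
    _ = ε := by ring

/-- Poisson's formula: the maximum principle on balls of radius `ρ < 1` bounds the difference of the
two sides, which is small on the sphere of radius `ρ` as `ρ → 1`. -/
lemma poisson_representation {d : ℕ} (hd : 2 ≤ d) {φ : Ed d → ℝ}
    (hφ : ContinuousOn φ (closedBall 0 1)) (hL : ∀ x ∈ ball (0 : Ed d) 1, LineLap φ x 0)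
    {x : Ed d} (hx : ‖x‖ < 1) :
    poissonInt (fun ω => φ ω) x = sphereMass d * φ x := by
  have hg : Continuous fun ω : sphere (0 : Ed d) 1 => φ ω :=
    hφ.comp_continuous continuous_subtype_val fun ω => sphere_subset_closedBall ω.2
  rw [← sub_eq_zero, ← abs_eq_zero]
  refine le_antisymm (le_of_forall_pos_le_add fun ε hε => ?_) (abs_nonneg _)
  rw [zero_add]
  obtain ⟨r, hr1, hr⟩ := poissonInt_sub_le hd hφ hε
  obtain ⟨ρ, hρ, hρ1⟩ := exists_between (max_lt hr1 hx)
  have hρr := (le_max_left r ‖x‖).trans_lt hρ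
  have hρx := (le_max_right r ‖x‖).trans_lt hρ
  have hxm : x ∈ closedBall (0 : Ed d) ρ := by simpa using hρx.le
  have main : ∀ a : ℝ, |a| = 1 →
      a * poissonInt (fun ω => φ ω) x + a * (-sphereMass d) * φ x ≤ ε := by
    intro a ha
    refine max_principle hd
      (fun y => a * poissonInt (fun ω => φ ω) y + a * (-sphereMass d) * φ y) ρ ?_ ?_ ε ?_ x hxm
    · have c1 := (continuousOn_poissonInt hg).mono (closedBall_subset_ball hρ1)
      have c2 := hφ.mono (closedBall_subset_closedBall hρ1.le)
      exact (continuousOn_const.mul c1).add (continuousOn_const.mul c2)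
    · intro y hy
      have hy1 : ‖y‖ < 1 := (mem_ball_zero_iff.1 hy).trans hρ1
      simpa using ((lineLap_poissonInt hg hy1).const_mul a).add
        ((hL y (by simpa using hy1)).const_mul (a * (-sphereMass d)))
    · intro y hy
      have hyn : ‖y‖ = ρ := mem_sphere_zero_iff_norm.1 hy
      have := hr y (by rwa [hyn]) (by rwa [hyn])
      calc a * poissonInt (fun ω => φ ω) y + a * (-sphereMass d) * φ y
          = a * (poissonInt (fun ω => φ ω) y - sphereMass d * φ y) := by ring
        _ ≤ |a * (poissonInt (fun ω => φ ω) y - sphereMass d * φ y)| := le_abs_self _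
        _ ≤ ε := by rwa [abs_mul, ha, one_mul]
  have m1 := main 1 (by simp)
  have m2 := main (-1) (by simp)
  rw [abs_le]
  constructor <;> linarith

/-! ### The bound -/

lemma sphereMass_pos {d : ℕ} (hd : 2 ≤ d) : 0 < sphereMass d := by
  have : Nonempty (Fin d) := ⟨⟨0, by omega⟩⟩
  have hfin : (volume : Measure (Ed d)).toSphere univ ≠ ⊤ := measure_ne_top _ _
  refine ENNReal.toReal_pos (fun h => ?_) hfin
  rw [Measure.measure_univ_eq_zero] at h
  exact Measure.toSphere_ne_zero _ h

/-- The normalized Poisson kernel with values in `[0, ∞]`. -/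
def pkE (d : ℕ) (x : Ed d) (ω : sphere (0 : Ed d) 1) : ℝ≥0∞ :=
  ENNReal.ofReal (pk d x ω / sphereMass d)

lemma measurable_pkE (d : ℕ) : Measurable (Function.uncurry (pkE d)) := by
  unfold Function.uncurry pkE pk
  fun_prop

lemma lintegral_pkE {d : ℕ} (hd : 2 ≤ d) {x : Ed d} (hx : ‖x‖ < 1) :
    ∫⁻ ω, pkE d x ω ∂(volume : Measure (Ed d)).toSphere ≤ 1 := by
  have hS := sphereMass_pos hd
  have hk := continuous_kernel_mul (continuousOn_pk d) (g := fun _ => (1 : ℝ)) continuous_const hx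
  simp only [mul_one] at hk
  unfold pkE
  rw [← ofReal_integral_eq_lintegral_ofReal ((integrable_sphere hk).div_const _)
    (.of_forall fun ω => div_nonneg (pk_nonneg hx _) hS.le), integral_div]
  have := poissonInt_one hd hx
  simp only [poissonInt, mul_one] at this
  rw [this, div_self hS.ne', ENNReal.ofReal_one]

/-- The constant `B` in the bound `∫_E P(x, ω) dx ≤ B |E|^{1/d}` for `E` inside the unit ball, where
`P` is the normalized Poisson kernel. -/
def kernelConst (d : ℕ) : ℝ :=
  2 / sphereMass d * (d * volume.real (ball (0 : Ed d) 1) + 1)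

lemma setLIntegral_pkE {d : ℕ} (hd : 2 ≤ d) {E : Set (Ed d)} (hE : MeasurableSet E)
    (ω : sphere (0 : Ed d) 1) :
    ∫⁻ x in E, pkE d x ω ∂(volume.restrict (ball (0 : Ed d) 1))
      ≤ ENNReal.ofReal (kernelConst d) *
        (volume.restrict (ball (0 : Ed d) 1)) E ^ (1 / (d : ℝ)) := by
  have hS := sphereMass_pos hd
  have hEm := hE.inter (measurableSet_ball (x := (0 : Ed d)) (ε := 1))
  rw [Measure.restrict_restrict hE, Measure.restrict_apply hE]
  have hfin : volume (E ∩ ball (0 : Ed d) 1) ≠ ⊤ :=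
    ((measure_mono inter_subset_right).trans_lt measure_ball_lt_top).ne
  have h := lintegral_riesz_le d hd _ hEm hfin (ω : Ed d)
  calc ∫⁻ x in E ∩ ball (0 : Ed d) 1, pkE d x ω
      ≤ ∫⁻ x in E ∩ ball (0 : Ed d) 1,
          ENNReal.ofReal (2 / sphereMass d) * ENNReal.ofReal ((‖x - ω‖ ^ (d - 1))⁻¹) := by
        refine setLIntegral_mono' hEm fun x hx => ?_
        rw [← ENNReal.ofReal_mul (by positivity)]
        refine ENNReal.ofReal_le_ofReal ?_
        rw [div_mul_eq_mul_div]
        gcongr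
        exact pk_le hd (mem_ball_zero_iff.1 hx.2) (by simp)
    _ = ENNReal.ofReal (2 / sphereMass d) *
          ∫⁻ x in E ∩ ball (0 : Ed d) 1, ENNReal.ofReal ((‖x - ω‖ ^ (d - 1))⁻¹) := by
        rw [lintegral_const_mul' _ _ ENNReal.ofReal_ne_top]
    _ ≤ _ := by
        rw [kernelConst, ENNReal.ofReal_mul (by positivity), mul_assoc]
        gcongr

lemma ofReal_abs_le_lintegral_pkE {d : ℕ} (hd : 2 ≤ d) {φ : Ed d → ℝ}
    (hφ : ContinuousOn φ (closedBall 0 1)) (hL : ∀ x ∈ ball (0 : Ed d) 1, LineLap φ x 0)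
    {x : Ed d} (hx : ‖x‖ < 1) :
    ENNReal.ofReal |φ x| ≤ ∫⁻ ω : sphere (0 : Ed d) 1, pkE d x ω * ENNReal.ofReal |φ ω|
      ∂(volume : Measure (Ed d)).toSphere := by
  have hS := sphereMass_pos hd
  have hg : Continuous fun ω : sphere (0 : Ed d) 1 => φ ω :=
    hφ.comp_continuous continuous_subtype_val fun ω => sphere_subset_closedBall ω.2
  have hrep : φ x = ∫ ω : sphere (0 : Ed d) 1, pk d x ω * φ ω / sphereMass d
      ∂(volume : Measure (Ed d)).toSphere := by
    rw [integral_div, eq_div_iff hS.ne', mul_comm]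
    exact (poisson_representation hd hφ hL hx).symm
  have h := enorm_integral_le_lintegral_enorm (μ := (volume : Measure (Ed d)).toSphere)
    (fun ω : sphere (0 : Ed d) 1 => pk d x ω * φ ω / sphereMass d)
  rw [← hrep, Real.enorm_eq_ofReal_abs] at h
  refine h.trans (lintegral_mono fun ω => ?_)
  have hp : 0 ≤ pk d x ω / sphereMass d := div_nonneg (pk_nonneg hx _) hS.le
  rw [Real.enorm_eq_ofReal_abs, pkE, ← ENNReal.ofReal_mul hp, mul_div_right_comm, abs_mul,
    abs_of_nonneg hp]

/-- If `φ` is harmonic on a neighborhood of the closed unit ball with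
`∫_{∂B₁} φ = 0`, then `(∫_{B₁}|φ|^p)^{1/p} ≲ (∫_{∂B₁} φ²)^{1/2}` with `p = 2d/(d−1)`. -/
theorem harmonic_Lp_bound (d : ℕ) (hd : 2 ≤ d) :
    ∃ C : ℝ, 0 < C ∧
    ∀ φ : Ed d → ℝ, ∀ U : Set (Ed d), IsOpen U → closedBall (0 : Ed d) 1 ⊆ U →
      ContDiffOn ℝ (⊤ : ℕ∞) φ U → (∀ x ∈ U, lap φ x = 0) →
      (∫ x in sphere (0 : Ed d) 1, φ x ∂(μH[(d:ℝ) - 1])) = 0 →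
      (∫⁻ x in ball (0 : Ed d) 1, ENNReal.ofReal (|φ x| ^ ((2 * d : ℝ) / (d - 1))))
          ^ ((d - 1 : ℝ) / (2 * d))
        ≤ ENNReal.ofReal C *
          (∫⁻ x in sphere (0 : Ed d) 1, ENNReal.ofReal ((φ x) ^ 2) ∂(μH[(d:ℝ) - 1]))
            ^ ((1 : ℝ) / 2) := by
  have hd2 : (2 : ℝ) ≤ d := by exact_mod_cast hd
  obtain ⟨c, hc, hsph⟩ := toSphere_lintegral_le d hd
  set s : ℝ := (d : ℝ) / (d - 1) with hs
  set q : ℝ := (d - 1 : ℝ) / (2 * d) with hq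
  have hs0 : 0 ≤ s := div_nonneg (by linarith) (by linarith)
  have hq0 : 0 ≤ q := div_nonneg (by linarith) (by linarith)
  have hsq : s * q = 1 / 2 := by
    have : (d : ℝ) - 1 ≠ 0 := by linarith
    rw [hs, hq]; field_simp
  set Γ : ℝ≥0∞ := (ENNReal.ofReal ((2 * d : ℝ) / (d - 1)) *
    ((2 * ENNReal.ofReal (kernelConst d)) ^ s * (2 * ENNReal.ofReal c) ^ s)) ^ q with hΓ
  have hΓtop : Γ ≠ ⊤ := by
    refine ENNReal.rpow_ne_top_of_nonneg hq0 (ENNReal.mul_ne_top ENNReal.ofReal_ne_top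
      (ENNReal.mul_ne_top (ENNReal.rpow_ne_top_of_nonneg hs0 ?_)
        (ENNReal.rpow_ne_top_of_nonneg hs0 ?_))) <;>
    exact ENNReal.mul_ne_top (by norm_num) ENNReal.ofReal_ne_top
  refine ⟨Γ.toReal + 1, by positivity, fun φ U hU hBU hφ hlap _ => ?_⟩
  have hcont : ContinuousOn φ (closedBall 0 1) := hφ.continuousOn.mono hBU
  have hL : ∀ x ∈ ball (0 : Ed d) 1, LineLap φ x 0 := fun x hx =>
    have hxU := hBU (ball_subset_closedBall hx)
    lineLap_of_lap hU hφ hxU (hlap x hxU)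
  have hg : Continuous fun ω : sphere (0 : Ed d) 1 => φ ω :=
    hcont.comp_continuous continuous_subtype_val fun ω => sphere_subset_closedBall ω.2
  have hball : ∀ᵐ x ∂(volume.restrict (ball (0 : Ed d) 1)), ‖x‖ < 1 :=
    (ae_restrict_mem measurableSet_ball).mono fun x hx => mem_ball_zero_iff.1 hx
  have hfinite : IsFiniteMeasure (volume.restrict (ball (0 : Ed d) 1)) :=
    isFiniteMeasure_restrict.2 measure_ball_lt_top.ne
  have key := interpolation (volume.restrict (ball (0 : Ed d) 1)) (volume : Measure (Ed d)).toSphere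
    (pkE d) (measurable_pkE d) d hd (ENNReal.ofReal (kernelConst d))
    (hball.mono fun x hx => lintegral_pkE hd hx) (fun E hE ω => setLIntegral_pkE hd hE ω)
    (fun x => |φ x|) (fun x => abs_nonneg _)
    ((hcont.mono ball_subset_closedBall).aemeasurable measurableSet_ball).abs
    (fun ω => |φ ω|) (fun ω => abs_nonneg _) hg.abs.measurable
    (hball.mono fun x hx => ofReal_abs_le_lintegral_pkE hd hcont hL hx)
  simp only [sq_abs] at key
  have hσ := hsph fun x => ENNReal.ofReal (φ x ^ 2)
  set I := ∫⁻ x in sphere (0 : Ed d) 1, ENNReal.ofReal ((φ x) ^ 2) ∂(μH[(d:ℝ) - 1])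
  calc (∫⁻ x in ball (0 : Ed d) 1, ENNReal.ofReal (|φ x| ^ ((2 * d : ℝ) / (d - 1)))) ^ q
      ≤ (ENNReal.ofReal ((2 * d : ℝ) / (d - 1)) * ((2 * ENNReal.ofReal (kernelConst d)) ^ s *
          (2 * (ENNReal.ofReal c * I)) ^ s)) ^ q := by
        refine ENNReal.rpow_le_rpow (key.trans ?_) hq0
        gcongr
    _ = Γ * I ^ ((1 : ℝ) / 2) := by
        rw [← mul_assoc 2, ENNReal.mul_rpow_of_nonneg (2 * ENNReal.ofReal c) I hs0, ← mul_assoc,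
          ← mul_assoc, ENNReal.mul_rpow_of_nonneg _ _ hq0, ← ENNReal.rpow_mul, hsq, hΓ, mul_assoc]
    _ ≤ ENNReal.ofReal (Γ.toReal + 1) * I ^ ((1 : ℝ) / 2) := by
        gcongr
        rw [← ENNReal.ofReal_toReal hΓtop]
        refine ENNReal.ofReal_le_ofReal ?_
        rw [ENNReal.toReal_ofReal ENNReal.toReal_nonneg]
        linarith
end
end
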